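/- arXiv:2505.05526 — 4 statements merged into one kernel-verified Lean document; each statement's English description precedes it below -/
import Mathlib

section
/- Let U : ℂ₊ → [0,∞) be a positive harmonic function on the upper half-plane ℂ₊ = {z ∈ ℂ : Im z > 0}, and suppose there is a constant C > 0 such that U(x+iy) ≤ C/y for all x ∈ ℝ and y > 0. Then there exists a finite positive Borel measure μ on ℝ such that U(x+iy) = (1/π) ∫_ℝ y/((x−u)² + y²) dμ(u) for all x ∈ ℝ, y > 0; moreover such a measure μ is unique. -/
open MeasureTheory

open Filter Topology InnerProductSpace

lemma hz_slice (g : ℂ → ℝ) (z v : ℂ) (t0 : ℝ) (hg : ContDiffAt ℝ 2 g (z + t0 • v)) :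
    iteratedDeriv 2 (fun s : ℝ => g (z + s • v)) t0
      = iteratedFDeriv ℝ 2 g (z + t0 • v) ![v, v] := by
  rw [iteratedFDeriv_two_apply, iteratedDeriv_succ, iteratedDeriv_one]
  have hL : ∀ s : ℝ, HasDerivAt (fun s : ℝ => z + s • v) v s := fun s => by
    simpa using ((hasDerivAt_id s).smul_const v).const_add z
  have hev : ∀ᶠ s in 𝓝 t0, ContDiffAt ℝ 2 g (z + s • v) :=
    (hL t0).continuousAt.eventually (hg.eventually (by simp))
  have h1 : deriv (fun s : ℝ => g (z + s • v)) =ᶠ[𝓝 t0] fun s => fderiv ℝ g (z + s • v) v := by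
    filter_upwards [hev] with s hs
    exact ((hs.differentiableAt (by simp)).hasFDerivAt.comp_hasDerivAt s (hL s)).deriv
  rw [h1.deriv_eq]
  have h2 : DifferentiableAt ℝ (fderiv ℝ g) (z + t0 • v) :=
    (hg.fderiv_right (m := 1) (by norm_num)).differentiableAt (by simp)
  have h4 : HasDerivAt (fun s : ℝ => fderiv ℝ g (z + s • v))
      (fderiv ℝ (fderiv ℝ g) (z + t0 • v) v) t0 := h2.hasFDerivAt.comp_hasDerivAt t0 (hL t0)
  have h3 : HasDerivAt (fun s : ℝ => fderiv ℝ g (z + s • v) v)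
      (fderiv ℝ (fderiv ℝ g) (z + t0 • v) v v) t0 :=
    (ContinuousLinearMap.apply ℝ ℝ v).hasFDerivAt.comp_hasDerivAt t0 h4
  rw [h3.deriv]
  rfl

lemma hz_harm (U : ℝ → ℝ → ℝ)
    (hC2 : ContDiffOn ℝ 2 (fun p : ℝ × ℝ => U p.1 p.2) {p : ℝ × ℝ | 0 < p.2})
    (hharm : ∀ x y : ℝ, 0 < y →
      iteratedDeriv 2 (fun s : ℝ => U s y) x + iteratedDeriv 2 (fun t : ℝ => U x t) y = 0) :
    HarmonicOnNhd (fun z : ℂ => U z.re z.im) {z : ℂ | 0 < z.im} := by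
  have hc : ∀ z : ℂ, 0 < z.im → ContDiffAt ℝ 2 (fun z : ℂ => U z.re z.im) z := by
    intro z hz
    have ho : IsOpen {p : ℝ × ℝ | 0 < p.2} := isOpen_lt continuous_const continuous_snd
    have h1 : ContDiffAt ℝ 2 (fun p : ℝ × ℝ => U p.1 p.2) (z.re, z.im) :=
      hC2.contDiffAt (ho.mem_nhds hz)
    have h2 : ContDiffAt ℝ 2 (fun z : ℂ => (z.re, z.im)) z :=
      (Complex.reCLM.contDiff.prodMk Complex.imCLM.contDiff).contDiffAt
    exact ContDiffAt.comp (f := fun z : ℂ => (z.re, z.im)) z h1 h2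
  intro z hz
  refine ⟨hc z hz, ?_⟩
  have ho : IsOpen {z : ℂ | 0 < z.im} := isOpen_lt continuous_const Complex.continuous_im
  filter_upwards [ho.mem_nhds hz] with w hw
  rw [laplacian_eq_iteratedFDeriv_complexPlane]
  have e1 := hz_slice (fun z : ℂ => U z.re z.im) (w.im * Complex.I) 1 w.re
    (hc _ (by simpa using hw))
  have e2 := hz_slice (fun z : ℂ => U z.re z.im) (w.re) Complex.I w.im
    (hc _ (by simpa using hw))
  have w1 : (w.im * Complex.I + w.re • (1:ℂ)) = w := by apply Complex.ext <;> simp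
  have w2 : (w.re + w.im • Complex.I : ℂ) = w := by apply Complex.ext <;> simp
  rw [w1] at e1
  rw [w2] at e2
  simp only [Pi.zero_apply]
  rw [← e1, ← e2]
  simpa using hharm w.re w.im hw


/-- deformed kernel -/
noncomputable def hzK (x y d p q : ℝ) : ℝ :=
  ((y - 2*d) - (x^2 + (y-2*d)^2) * d) * (q^2 + d^2*p^2) /
    ((p + x*q - d*(y-2*d)*p)^2 + ((y-2*d)*q + d*x*p)^2)

noncomputable def hzc (R : ℝ) : ℂ := ((R + 1/R : ℝ) : ℂ) * Complex.I

noncomputable def hzv (R θ : ℝ) : ℂ :=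
  ⟨2*R*Real.sin (Real.pi/4+θ/2), -Real.cos (Real.pi/4+θ/2)⟩

lemma hzv_ne (R θ : ℝ) (hR : 0 < R) : hzv R θ ≠ 0 := by
  intro h
  have h1 := congrArg Complex.re h
  have h2 := congrArg Complex.im h
  simp [hzv, hR.ne'] at h1 h2
  have := Real.sin_sq_add_cos_sq (Real.pi/4+θ/2)
  rw [h1, h2] at this
  norm_num at this

/-- the unit circle -/
abbrev HzS : Type := Metric.sphere (0 : ℂ) 1

noncomputable def hze (R θ : ℝ) : HzS :=
  ⟨Complex.exp ((hzv R θ).arg * Complex.I), by simp⟩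

lemma hze_meas (R : ℝ) : Measurable (hze R) := by
  unfold hze
  have : Measurable (hzv R) := by
    have : hzv R = fun θ => ((2*R*Real.sin (Real.pi/4+θ/2) : ℝ) : ℂ)
      + ((-Real.cos (Real.pi/4+θ/2) : ℝ) : ℂ) * Complex.I := by
      ext θ
      exact Complex.mk_eq_add_mul_I _ _
    rw [this]; fun_prop
  refine Measurable.subtype_mk ?_
  have h2 : Measurable (fun θ => (hzv R θ).arg) := Complex.measurable_arg.comp this
  fun_prop

lemma hze_eq (R θ : ℝ) (hR : 0 < R) : ∃ k : ℝ, k ≠ 0 ∧ ((hze R θ : HzS) : ℂ).re = k * (2*R*Real.sin (Real.pi/4+θ/2)) ∧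
   ((hze R θ : HzS) : ℂ).im = k * (-Real.cos (Real.pi/4+θ/2)) := by
  refine ⟨‖hzv R θ‖⁻¹, by simpa using hzv_ne R θ hR, ?_, ?_⟩
  · have := Complex.cos_arg (hzv_ne R θ hR)
    simp [hze, Complex.exp_ofReal_mul_I_re, this]
    rw [div_eq_inv_mul]; rfl
  · have := Complex.sin_arg (hzv R θ)
    simp [hze, Complex.exp_ofReal_mul_I_im, this]
    rw [div_eq_inv_mul]; simp [hzv]

lemma hzK_hom (x y d p q k : ℝ) (hk : k ≠ 0) : hzK x y d (k*p) (k*q) = hzK x y d p q := by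
  unfold hzK
  conv_rhs => rw [← mul_div_mul_left _ _ (pow_ne_zero 2 hk)]
  congr 1 <;> ring

lemma hz_kernel (R θ x y : ℝ) (hR : 0 < R) :
    poissonKernel (hzc R) (⟨x, y⟩ : ℂ) (circleMap (hzc R) R θ)
      = 2*R * hzK x y (1/(2*R)) ((hze R θ : HzS) : ℂ).re ((hze R θ : HzS) : ℂ).im := by
  obtain ⟨k, hk, h1, h2⟩ := hze_eq R θ hR
  rw [h1, h2, hzK_hom _ _ _ _ _ _ hk]
  set φ := Real.pi/4+θ/2 with hφ
  have hθ : θ = 2*φ - Real.pi/2 := by rw [hφ]; ring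
  have hcos : Real.cos θ = 2 * Real.sin φ * Real.cos φ := by
    rw [hθ, Real.cos_sub_pi_div_two, Real.sin_two_mul]
  have hsin : Real.sin θ = 2 * Real.sin φ^2 - 1 := by
    rw [hθ, Real.sin_sub_pi_div_two, Real.cos_two_mul, Real.cos_sq']; ring
  have hs := Real.sin_sq_add_cos_sq φ
  have e1 : circleMap (hzc R) R θ - hzc R = ⟨R * Real.cos θ, R * Real.sin θ⟩ := by
    apply Complex.ext <;> simp [circleMap, Complex.exp_ofReal_mul_I_re, Complex.exp_ofReal_mul_I_im]
  have e2 : (⟨x, y⟩ : ℂ) - hzc R = ⟨x, y - R - 1/R⟩ := by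
    apply Complex.ext <;> simp [hzc]; ring
  rw [poissonKernel_def, e1, e2]
  simp only [← Complex.normSq_eq_norm_sq, Complex.normSq_apply, Complex.sub_re, Complex.sub_im]
  rw [hcos, hsin, hzK]
  generalize Real.sin φ = s at *
  generalize Real.cos φ = c at *
  clear_value φ
  have hc : c^2 = 1 - s^2 := by linarith
  rw [mul_div_assoc']
  set e := y - 1/R with he
  have ey : y - 2*(1/(2*R)) = e := by rw [he]; field_simp
  rw [ey, show y - R - 1/R = e - R by rw [he]; ring]
  clear_value e
  have hN : R * (2 * s * c) * (R * (2 * s * c)) + R * (2 * s ^ 2 - 1) * (R * (2 * s ^ 2 - 1)) -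
      (x * x + (e - R) * (e - R)) = 2*R*(e - (x^2+e^2)*(1/(2*R))) := by
    field_simp
    linear_combination (R^2*4*s^2)*hc
  have hM : ((-c)^2 + (1/(2*R))^2 * (2*R*s)^2) = 1 := by
    field_simp; linarith
  have hD : (R * (2 * s * c) - x) * (R * (2 * s * c) - x) +
        (R * (2 * s ^ 2 - 1) - (e - R)) * (R * (2 * s ^ 2 - 1) - (e - R)) = 
       (2 * R * s + x * -c - 1 / (2 * R) * e * (2 * R * s)) ^ 2 +
        (e * -c + 1 / (2 * R) * x * (2 * R * s)) ^ 2 := by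
    field_simp
    linear_combination (4*R^2*s^2 - x^2 - e^2) * hc
  rw [hN, hM, hD, mul_one]

lemma hzK_zero (x y p q : ℝ) (hq : q ≠ 0) (hy : 0 < y) : hzK x y 0 p q = y / ((x - (-p/q))^2 + y^2) := by
  unfold hzK
  have : (0:ℝ) < (p + x*q)^2 + (y*q)^2 := by positivity
  have h2 : (0:ℝ) < (x - (-p/q))^2 + y^2 := by positivity
  simp only [mul_zero, sub_zero, zero_mul]
  rw [div_eq_div_iff (by ring_nf; ring_nf at this; exact this.ne') h2.ne']
  field_simp
  ring

lemma hzK_cont (x y : ℝ) (hy : 0 < y) :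
    ∃ V ∈ 𝓝 (0:ℝ), ContinuousOn (fun a : ℝ × HzS => hzK x y a.1 (a.2 : ℂ).re (a.2 : ℂ).im)
      (V ×ˢ Set.univ) := by
  let D : ℝ × HzS → ℝ := fun a => (((a.2 : ℂ).re + x*(a.2 : ℂ).im - a.1*(y-2*a.1)*(a.2 : ℂ).re)^2
    + ((y-2*a.1)*(a.2 : ℂ).im + a.1*x*(a.2 : ℂ).re)^2)
  have hD : Continuous D := by fun_prop
  have hO : IsOpen {a | D a ≠ 0} := isOpen_ne_fun hD continuous_const
  have hsub : ({0} : Set ℝ) ×ˢ (Set.univ : Set HzS) ⊆ {a | D a ≠ 0} := by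
    rintro ⟨d, z⟩ ⟨hd, -⟩
    simp only [Set.mem_singleton_iff] at hd
    subst hd
    simp only [Set.mem_ofPred_eq, D, zero_mul, mul_zero, sub_zero, add_zero]
    intro h
    have hz : (z : ℂ).re^2 + (z : ℂ).im^2 = 1 := by
      have := z.2
      rw [mem_sphere_zero_iff_norm] at this
      have h := Complex.normSq_eq_norm_sq (z : ℂ)
      rw [this, Complex.normSq_apply] at h; linarith
    have h1 : y * (z : ℂ).im = 0 := by nlinarith [sq_nonneg ((z : ℂ).re + x * (z : ℂ).im), sq_nonneg (y * (z : ℂ).im)]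
    have h2 : (z : ℂ).im = 0 := by simpa [hy.ne'] using h1
    rw [h2] at h hz
    nlinarith
  obtain ⟨u, v, hu, hv, h0, h1, huv⟩ := generalized_tube_lemma isCompact_singleton isCompact_univ hO hsub
  refine ⟨u, hu.mem_nhds (by simpa using h0), ?_⟩
  unfold hzK
  refine ContinuousOn.div (by fun_prop) hD.continuousOn ?_
  intro a ha
  exact huv ⟨ha.1, h1 ha.2⟩

lemma hz_nu (U : ℝ → ℝ → ℝ) (C : ℝ) (hC : 0 < C)
    (hpos : ∀ x y : ℝ, 0 < y → 0 ≤ U x y)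
    (hH : HarmonicOnNhd (fun z : ℂ => U z.re z.im) {z : ℂ | 0 < z.im})
    (hbdd : ∀ x y : ℝ, 0 < y → U x y ≤ C / y) (R : ℝ) (hR : 0 < R) :
    ∃ ν : FiniteMeasure HzS, ν.mass ≤ (2*C).toNNReal ∧
      ∀ x y : ℝ, (⟨x, y⟩ : ℂ) ∈ Metric.ball (hzc R) R →
        U x y = ∫ z : HzS, hzK x y (1/(2*R)) (z : ℂ).re (z : ℂ).im ∂(ν : Measure HzS) := by
  have hsub : Metric.closedBall (hzc R) R ⊆ {z : ℂ | 0 < z.im} := by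
    intro z hz
    rw [mem_closedBall_iff_norm] at hz
    have h1 := (Complex.abs_im_le_norm (z - hzc R)).trans hz
    have h2 := (abs_le.1 h1).1
    have h3 : 0 < 1/R := by positivity
    simp only [hzc, Complex.sub_im, Complex.mul_im, Complex.ofReal_re, Complex.I_im,
      Complex.ofReal_im, Complex.I_re, mul_one, mul_zero, add_zero] at h2
    change 0 < z.im
    linarith
  have hH2 := fun z hz => hH z (hsub hz)
  set f : ℂ → ℝ := fun z : ℂ => U z.re z.im with hf
  have hcm : ∀ θ, circleMap (hzc R) R θ ∈ Metric.closedBall (hzc R) R :=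
    circleMap_mem_closedBall _ hR.le
  set w : ℝ → ℝ := fun θ => R / Real.pi * f (circleMap (hzc R) R θ) with hw
  have hwc : Continuous w := by
    refine continuous_const.mul ?_
    have : ContinuousOn f (Metric.closedBall (hzc R) R) :=
      HarmonicOnNhd.continuousOn hH2
    exact this.comp_continuous (continuous_circleMap _ _) hcm
  have hw0 : ∀ θ, 0 ≤ w θ := fun θ =>
    mul_nonneg (by positivity) (hpos _ _ (hsub (hcm θ)))
  set m : Measure ℝ := volume.restrict (Set.Ioc 0 (2*Real.pi)) with hm
  have hwi : Integrable w m := (hwc.integrableOn_Icc).mono_set Set.Ioc_subset_Icc_self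
  have hpi := Real.pi_pos
  have hint : ∫ θ, w θ ∂m = 2 * R * f (hzc R) := by
    have h1 := InnerProductSpace.HarmonicOnNhd.circleAverage_eq (f := f) (c := hzc R) (R := R)
      (by rw [abs_of_pos hR]; exact hH2)
    rw [← h1, Real.circleAverage_def, intervalIntegral.integral_of_le (by positivity), hw,
      integral_const_mul, smul_eq_mul, hm]
    generalize ∫ a in Set.Ioc 0 (2 * Real.pi), f (circleMap (hzc R) R a) = J
    field_simp
  set ρ : Measure HzS := (m.withDensity (fun θ => ENNReal.ofReal (w θ))).map (hze R) with hρ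
  have hmass : ρ Set.univ ≤ ENNReal.ofReal (2*C) := by
    rw [hρ, Measure.map_apply (hze_meas R) MeasurableSet.univ, Set.preimage_univ,
      withDensity_apply _ MeasurableSet.univ, Measure.restrict_univ,
      ← ofReal_integral_eq_lintegral_ofReal hwi (ae_of_all _ hw0), hint]
    apply ENNReal.ofReal_le_ofReal
    have h3 : 0 < 1/R := by positivity
    have h1 := hbdd (hzc R).re (hzc R).im (by simp [hzc]; positivity)
    have h2 : (hzc R).im = R + 1/R := by simp [hzc]
    have h4 : f (hzc R) ≤ C / R := by
      refine h1.trans ?_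
      rw [h2]
      gcongr
      linarith
    calc 2 * R * f (hzc R) ≤ 2 * R * (C / R) := by gcongr
      _ = 2 * C := by field_simp
  have hfin : IsFiniteMeasure ρ := ⟨hmass.trans_lt ENNReal.ofReal_lt_top⟩
  let ν0 : FiniteMeasure HzS := ⟨ρ, hfin⟩
  refine ⟨ν0, ?_, ?_⟩
  · rw [← ENNReal.coe_le_coe]
    exact (FiniteMeasure.ennreal_mass (μ := ν0)).trans_le hmass
  · intro x y hxy
    have h1 := HarmonicOnNhd.circleAverage_poissonKernel_smul (f := f) hH2 hxy
    have hKm : Measurable (fun z : HzS => hzK x y (1/(2*R)) (z : ℂ).re (z : ℂ).im) := by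
      unfold hzK; fun_prop
    change U x y = ∫ z : HzS, hzK x y (1/(2*R)) (z : ℂ).re (z : ℂ).im ∂ρ
    rw [hρ, integral_map (hze_meas R).aemeasurable hKm.aestronglyMeasurable,
      integral_withDensity_eq_integral_toReal_smul (by fun_prop) (by simp)]
    change _ = f ⟨x, y⟩ at h1
    change f ⟨x, y⟩ = _
    rw [← h1, Real.circleAverage_def, intervalIntegral.integral_of_le (by positivity), smul_eq_mul,
      ← integral_const_mul]
    refine integral_congr_ae (ae_of_all _ fun θ => ?_)
    simp only [Pi.smul_apply', smul_eq_mul]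
    rw [hz_kernel R θ x y hR, ENNReal.toReal_ofReal (hw0 θ), hw]
    field_simp

lemma hz_exists (U : ℝ → ℝ → ℝ) (C : ℝ) (hC : 0 < C)
    (hpos : ∀ x y : ℝ, 0 < y → 0 ≤ U x y)
    (hH : HarmonicOnNhd (fun z : ℂ => U z.re z.im) {z : ℂ | 0 < z.im})
    (hbdd : ∀ x y : ℝ, 0 < y → U x y ≤ C / y) :
    ∃ ν : FiniteMeasure HzS, ∀ x y : ℝ, 0 < y →
        U x y = ∫ z : HzS, hzK x y 0 (z : ℂ).re (z : ℂ).im ∂(ν : Measure HzS) := by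
  choose! νR hmass hrep using hz_nu U C hC hpos hH hbdd
  set νs : ℕ → FiniteMeasure HzS := fun n => νR (n+1) with hνs
  have hm : ∀ n, (νs n).mass ≤ (2*C).toNNReal := fun n => hmass _ (by positivity)
  let F : Ultrafilter ℕ := hyperfilter ℕ
  have hF : (F : Filter ℕ) ≤ atTop := Nat.hyperfilter_le_atTop
  obtain ⟨ν, -, hν⟩ := (isCompact_setOfPred_finiteMeasure_le_of_compactSpace HzS
    (2*C).toNNReal).ultrafilter_le_nhds (F.map νs) (by
      rw [le_principal_iff]
      exact Filter.mem_map.2 (Filter.univ_mem' hm))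
  have hT : Tendsto νs F (𝓝 ν) := hν
  refine ⟨ν, fun x y hy => ?_⟩
  obtain ⟨V, hV, hcont⟩ := hzK_cont x y hy
  have hunif : TendstoUniformly (fun (d : ℝ) (z : HzS) => hzK x y d (z : ℂ).re (z : ℂ).im)
      (fun z : HzS => hzK x y 0 (z : ℂ).re (z : ℂ).im) (𝓝 0) :=
    ContinuousOn.tendstoUniformly hV hcont
  have hc : ∀ d ∈ V, Continuous (fun z : HzS => hzK x y d (z : ℂ).re (z : ℂ).im) := by
    intro d hd
    exact hcont.comp_continuous (f := fun z : HzS => (d, z)) (by fun_prop) (fun z => ⟨hd, trivial⟩)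
  have h0 : (0:ℝ) ∈ V := mem_of_mem_nhds hV
  have hlim1 := FiniteMeasure.tendsto_iff_forall_integral_tendsto.1 hT
    (BoundedContinuousFunction.mkOfCompact ⟨_, hc 0 h0⟩)
  simp only [BoundedContinuousFunction.mkOfCompact_apply, ContinuousMap.coe_mk] at hlim1
  have hd : Tendsto (fun n : ℕ => 1/(2*((n:ℝ)+1))) atTop (𝓝 0) := by
    have := (tendsto_one_div_add_atTop_nhds_zero_nat (𝕜 := ℝ)).const_mul (1/2)
    simp only [mul_zero] at this
    refine this.congr fun n => ?_
    field_simp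
  have hball : ∀ᶠ n : ℕ in atTop, (⟨x, y⟩ : ℂ) ∈ Metric.ball (hzc ((n:ℝ)+1)) ((n:ℝ)+1) := by
    have h1 : Tendsto (fun n : ℕ => (y - 2*(1/(2*((n:ℝ)+1)))) -
        (x^2 + (y-2*(1/(2*((n:ℝ)+1))))^2) * (1/(2*((n:ℝ)+1)))) atTop
        (𝓝 ((y - 2*0) - (x^2+(y-2*0)^2)*0)) := by
      have h2 := (hd.const_mul 2).const_sub y
      exact h2.sub (((h2.pow 2).const_add (x^2)).mul hd)
    have h3 := h1.eventually (lt_mem_nhds (a := 0) (by simpa using hy))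
    filter_upwards [h3] with n hn
    have hR : (0:ℝ) < (n:ℝ)+1 := by positivity
    generalize (n:ℝ)+1 = R at hn hR ⊢
    rw [mem_ball_iff_norm]
    refine lt_of_pow_lt_pow_left₀ 2 hR.le ?_
    rw [← Complex.normSq_eq_norm_sq, Complex.normSq_apply]
    simp only [hzc, Complex.sub_re, Complex.sub_im, Complex.mul_re, Complex.mul_im,
      Complex.ofReal_re, Complex.I_im, Complex.ofReal_im, Complex.I_re, mul_one, mul_zero,
      add_zero, sub_zero]
    have e : y - 2*(1/(2*R)) = y - 1/R := by field_simp
    rw [e] at hn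
    have h4 := mul_pos (mul_pos two_pos hR) hn
    have e2 : 2*R*(y - 1 / R - (x ^ 2 + (y - 1 / R) ^ 2) * (1 / (2 * R)))
      = R^2 - (x * x + (y - (R + 1 / R)) * (y - (R + 1 / R))) := by
      field_simp; ring
    linarith
  have hdiff : Tendsto (fun n => U x y -
      ∫ z : HzS, hzK x y 0 (z : ℂ).re (z : ℂ).im ∂(νs n : Measure HzS)) atTop (𝓝 0) := by
    rw [Metric.tendsto_nhds]
    intro ε hε
    have hε2 : 0 < ε / (2*C+1) := by positivity
    have hu := hd.eventually (Metric.tendstoUniformly_iff.1 hunif _ hε2)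
    filter_upwards [hu, hball, hd.eventually hV] with n h1 h2 h3
    have hr := hrep ((n:ℝ)+1) (by positivity) x y h2
    change U x y = ∫ z : HzS, _ ∂(νs n : Measure HzS) at hr
    rw [dist_zero_right, hr, ← integral_sub]
    · have hb := norm_integral_le_of_norm_le_const (μ := (νs n : Measure HzS))
        (f := fun z : HzS => hzK x y (1/(2*((n:ℝ)+1))) (z : ℂ).re (z : ℂ).im
          - hzK x y 0 (z : ℂ).re (z : ℂ).im) (C := ε / (2*C+1))
        (ae_of_all _ fun z => by
          have := h1 z
          rw [dist_comm, dist_eq_norm] at this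
          exact this.le)
      refine hb.trans_lt ?_
      have hreal : (νs n : Measure HzS).real Set.univ ≤ 2*C := by
        have := hm n
        have h5 : ((νs n).mass : ℝ) ≤ ((2*C).toNNReal : ℝ) := by exact_mod_cast this
        rw [Real.coe_toNNReal _ (by positivity)] at h5
        exact h5
      calc ε / (2*C+1) * (νs n : Measure HzS).real Set.univ ≤ ε / (2*C+1) * (2*C) := by gcongr
        _ < ε / (2*C+1) * (2*C+1) := by gcongr; linarith
        _ = ε := by field_simp
    · exact (BoundedContinuousFunction.mkOfCompact ⟨_, hc _ h3⟩).integrable _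
    · exact (BoundedContinuousFunction.mkOfCompact ⟨_, hc 0 h0⟩).integrable _
  have hfinal := (hdiff.mono_left hF).add hlim1
  simp only [sub_add_cancel, zero_add] at hfinal
  exact tendsto_nhds_unique tendsto_const_nhds hfinal

lemma hz_exists' (U : ℝ → ℝ → ℝ) (ν : FiniteMeasure HzS) (h : ∀ x y : ℝ, 0 < y →
        U x y = ∫ z : HzS, hzK x y 0 (z : ℂ).re (z : ℂ).im ∂(ν : Measure HzS)) :
    ∃ μ : Measure ℝ, IsFiniteMeasure μ ∧
      ∀ x y : ℝ, 0 < y →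
        U x y = (1 / Real.pi) * ∫ u : ℝ, y / ((x - u) ^ 2 + y ^ 2) ∂μ := by
  let s : Set HzS := {z | (z : ℂ).im ≠ 0}
  have hs : MeasurableSet s := by
    have : IsOpen s := isOpen_ne_fun (by fun_prop) continuous_const
    exact this.measurableSet
  let g : HzS → ℝ := fun z => -(z : ℂ).re / (z : ℂ).im
  have hg : Measurable g := by
    have h1 : Measurable (fun z : HzS => (z : ℂ).re) := by fun_prop
    have h2 : Measurable (fun z : HzS => (z : ℂ).im) := by fun_prop
    exact h1.neg.div h2
  refine ⟨(ENNReal.ofReal Real.pi) • (((ν : Measure HzS).restrict s).map g), ?_, ?_⟩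
  · exact Measure.smul_finite _ ENNReal.ofReal_ne_top
  · intro x y hy
    have hm : Measurable (fun u : ℝ => y / ((x - u) ^ 2 + y ^ 2)) := by fun_prop
    rw [integral_smul_measure, integral_map hg.aemeasurable hm.aestronglyMeasurable,
      ENNReal.toReal_ofReal Real.pi_pos.le, smul_eq_mul, ← mul_assoc,
      one_div_mul_cancel Real.pi_ne_zero, one_mul, h x y hy]
    rw [← setIntegral_eq_integral_of_forall_compl_eq_zero (s := s)]
    · refine setIntegral_congr_fun hs fun z hz => ?_
      exact hzK_zero x y _ _ hz hy
    · intro z hz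
      have : (z : ℂ).im = 0 := by simpa [s] using hz
      simp [hzK, this]

/-- the unnormalised Cauchy measure -/
noncomputable def hzCau : Measure ℝ :=
  volume.withDensity (fun t => ENNReal.ofReal ((1 + t^2)⁻¹))

lemma hzCau_univ : hzCau Set.univ = ENNReal.ofReal Real.pi := by
  rw [hzCau, withDensity_apply _ MeasurableSet.univ, Measure.restrict_univ,
    ← ofReal_integral_eq_lintegral_ofReal integrable_inv_one_add_sq
      (ae_of_all _ fun t => by positivity), integral_univ_inv_one_add_sq]

instance hzCau_fin : IsFiniteMeasure hzCau := ⟨by rw [hzCau_univ]; exact ENNReal.ofReal_lt_top⟩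

lemma hz_conv (μ : Measure ℝ) [IsFiniteMeasure μ] (y : ℝ) (hy : 0 < y) :
    Measure.conv μ (hzCau.map (fun t => y * t)) = volume.withDensity
      (fun x => ENNReal.ofReal (∫ u, y / ((x - u)^2 + y^2) ∂μ)) := by
  have hden : ∀ x u : ℝ, 0 < (x-u)^2 + y^2 := fun x u => by positivity
  have hint : ∀ x, Integrable (fun u => y / ((x - u)^2 + y^2)) μ := by
    intro x
    have hc : Continuous (fun u => y / ((x - u)^2 + y^2)) :=
      continuous_const.div (by fun_prop) fun u => (hden x u).ne'
    refine Integrable.of_bound hc.aestronglyMeasurable (1/y) (ae_of_all _ fun u => ?_)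
    rw [Real.norm_of_nonneg (div_nonneg hy.le (hden x u).le), div_le_div_iff₀ (hden x u) hy]
    nlinarith [sq_nonneg (x-u)]
  have hrw : (fun x => ENNReal.ofReal (∫ u, y / ((x - u)^2 + y^2) ∂μ))
      = fun x => ∫⁻ u, ENNReal.ofReal (y / ((x - u)^2 + y^2)) ∂μ := by
    ext x
    exact ofReal_integral_eq_lintegral_ofReal (hint x)
      (ae_of_all _ fun u => div_nonneg hy.le (hden x u).le)
  rw [hrw]
  ext A hA
  have hkm : Measurable (fun t : ℝ => ENNReal.ofReal ((1 + t^2)⁻¹)) := by fun_prop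
  have hgm : Measurable (A.indicator (1 : ℝ → ENNReal)) := measurable_one.indicator hA
  rw [← lintegral_indicator_one hA, Measure.lintegral_conv hgm, withDensity_apply _ hA,
    ← lintegral_indicator hA]
  have hstep : ∀ u, ∫⁻ t, A.indicator (1 : ℝ → ENNReal) (u + t) ∂(hzCau.map (fun t => y * t))
      = ∫⁻ x, A.indicator (1 : ℝ → ENNReal) x * ENNReal.ofReal (y / ((x - u)^2 + y^2)) := by
    intro u
    rw [lintegral_map (by fun_prop) (by fun_prop), hzCau,
      lintegral_withDensity_eq_lintegral_mul _ hkm (by fun_prop)]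
    have e1 : ∀ t, ((fun t : ℝ => ENNReal.ofReal ((1 + t^2)⁻¹)) * fun t =>
        A.indicator (1 : ℝ → ENNReal) (u + y * t)) t
        = (fun s => A.indicator (1 : ℝ → ENNReal) (u + s) * ENNReal.ofReal ((1 + (s/y)^2)⁻¹))
          (y * t) := by
      intro t
      simp only [Pi.mul_apply]
      rw [mul_comm, mul_div_cancel_left₀ _ hy.ne']
    rw [lintegral_congr e1, ← lintegral_map (f := fun s => A.indicator (1 : ℝ → ENNReal) (u + s) *
        ENNReal.ofReal ((1 + (s/y)^2)⁻¹)) (by fun_prop) (by fun_prop),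
      Real.map_volume_mul_left hy.ne', lintegral_smul_measure,
      ← lintegral_add_left_eq_self (fun x => A.indicator (1 : ℝ → ENNReal) x *
        ENNReal.ofReal (y / ((x - u)^2 + y^2))) u, smul_eq_mul, ← lintegral_const_mul _ (by fun_prop)]
    refine lintegral_congr fun s => ?_
    rw [mul_left_comm, ← ENNReal.ofReal_mul (abs_nonneg _)]
    congr 2
    rw [abs_of_pos (by positivity), add_sub_cancel_left]
    field_simp
    ring
  simp_rw [hstep]
  rw [lintegral_lintegral_swap]
  · refine lintegral_congr fun x => ?_
    rw [lintegral_const_mul _ (by fun_prop)]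
    by_cases hx : x ∈ A <;> simp [hx]
  · refine Measurable.aemeasurable ?_
    refine (hgm.comp measurable_snd).mul ?_
    fun_prop

lemma hz_unique (μ ν : Measure ℝ) [IsFiniteMeasure μ] [IsFiniteMeasure ν]
    (h : ∀ x y : ℝ, 0 < y → ∫ u, y / ((x - u)^2 + y^2) ∂μ = ∫ u, y / ((x - u)^2 + y^2) ∂ν) :
    μ = ν := by
  apply Measure.ext_of_charFun
  ext t
  have hc : Tendsto (fun y : ℝ => charFun hzCau (y * t)) (𝓝[>] 0) (𝓝 (charFun hzCau 0)) := by
    have h1 : Continuous (fun y : ℝ => charFun hzCau (y * t)) :=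
      continuous_charFun.comp (by fun_prop)
    have := h1.tendsto 0
    simp only [zero_mul] at this
    exact this.mono_left nhdsWithin_le_nhds
  have h0 : charFun hzCau 0 ≠ 0 := by
    simp [charFun_zero, Measure.real, hzCau_univ, ENNReal.toReal_ofReal Real.pi_pos.le,
      Real.pi_ne_zero]
  obtain ⟨y, hy1, hy⟩ := ((hc.eventually_ne h0).and self_mem_nhdsWithin).exists
  have hy : 0 < y := hy
  have e : Measure.conv μ (hzCau.map (fun t => y * t)) = Measure.conv ν (hzCau.map (fun t => y * t)) := by
    rw [hz_conv μ y hy, hz_conv ν y hy]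
    congr 1
    ext x
    rw [h x y hy]
  have e2 := congrArg (fun m => charFun m t) e
  simp only [charFun_conv, charFun_map_mul] at e2
  exact mul_right_cancel₀ hy1 e2

/-- Herglotz representation theorem for positive harmonic functions on the
upper half-plane: a nonnegative harmonic function `U` on `ℂ₊` satisfying
`U(x+iy) ≤ C/y` is the Poisson integral of a unique finite positive Borel
measure on `ℝ`. -/
theorem herglotz_positive_harmonic
    (U : ℝ → ℝ → ℝ) (C : ℝ) (hC : 0 < C)
    (hpos : ∀ x y : ℝ, 0 < y → 0 ≤ U x y)
    (hC2 : ContDiffOn ℝ 2 (fun p : ℝ × ℝ => U p.1 p.2) {p : ℝ × ℝ | 0 < p.2})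
    (hharm : ∀ x y : ℝ, 0 < y →
      iteratedDeriv 2 (fun s : ℝ => U s y) x + iteratedDeriv 2 (fun t : ℝ => U x t) y = 0)
    (hbdd : ∀ x y : ℝ, 0 < y → U x y ≤ C / y) :
    ∃! μ : Measure ℝ, IsFiniteMeasure μ ∧
      ∀ x y : ℝ, 0 < y →
        U x y = (1 / Real.pi) * ∫ u : ℝ, y / ((x - u) ^ 2 + y ^ 2) ∂μ := by
  obtain ⟨ν, hν⟩ := hz_exists U C hC hpos (hz_harm U hC2 hharm) hbdd
  obtain ⟨μ, hμ, hrep⟩ := hz_exists' U ν hν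
  refine ⟨μ, ⟨hμ, hrep⟩, ?_⟩
  rintro μ' ⟨hμ', hrep'⟩
  refine hz_unique μ' μ fun x y hy => ?_
  have h := (hrep' x y hy).symm.trans (hrep x y hy)
  exact mul_left_cancel₀ (one_div_ne_zero Real.pi_ne_zero) h
end

section
/- Let f : ℂ₊ → ℂ be holomorphic on the upper half-plane with Im f(z) ≥ 0 for all z ∈ ℂ₊, and suppose there is a constant C > 0 such that Im f(x+iy) ≤ C/y for all x ∈ ℝ, y > 0. Then there exist a unique finite positive Borel measure μ on ℝ and a unique real number a such that f(z) = a + (1/π) ∫_ℝ (u − z)⁻¹ dμ(u) for all z ∈ ℂ₊. -/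
open MeasureTheory
open Filter Topology

/-- Herglotz representation on the disc (imaginary part). -/
lemma hz_disc (g : ℂ → ℂ) (hg : DifferentiableOn ℂ g (Metric.ball 0 1))
    (him : ∀ w ∈ Metric.ball (0:ℂ) 1, 0 ≤ (g w).im) :
    ∃ ν : Measure ℝ, IsFiniteMeasure ν ∧ ∀ w ∈ Metric.ball (0:ℂ) 1,
      (g w).im = ∫ θ : ℝ, ((circleMap 0 1 θ + w) / (circleMap 0 1 θ - w)).re ∂ν := by
  have key : ∀ r ∈ Set.Ioo (0:ℝ) 1, ∃ ν : FiniteMeasure ℝ, ν.mass ≤ Real.toNNReal (g 0).im ∧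
      ν (Set.Icc 0 (2 * Real.pi))ᶜ = 0 ∧ ∀ w ∈ Metric.ball (0:ℂ) 1,
      (g (r * w)).im = ∫ θ : ℝ, ((circleMap 0 1 θ + w) / (circleMap 0 1 θ - w)).re ∂(ν : Measure ℝ) := by
    intro r hr
    have hmaps : ∀ w ∈ Metric.closedBall (0:ℂ) 1, (r:ℂ) * w ∈ Metric.ball (0:ℂ) 1 := by
      intro w hw
      simp only [mem_closedBall_zero_iff, mem_ball_zero_iff, norm_mul, Complex.norm_real, Real.norm_eq_abs, abs_of_pos hr.1] at *
      nlinarith [hr.1, hr.2]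
    set h : ℝ → ℝ := fun θ => (2 * Real.pi)⁻¹ * (g (r * circleMap 0 1 θ)).im with hh
    have hcm : ∀ θ, circleMap (0:ℂ) 1 θ ∈ Metric.closedBall (0:ℂ) 1 := fun θ => by simp
    have hcont : Continuous h := by
      refine continuous_const.mul (Complex.continuous_im.comp ?_)
      refine hg.continuousOn.comp_continuous (by fun_prop) (fun θ => hmaps _ (hcm θ))
    have hnn : ∀ θ, 0 ≤ h θ := fun θ => mul_nonneg (by positivity) (him _ (hmaps _ (hcm θ)))
    let ν : Measure ℝ := (volume.restrict (Set.Ioc 0 (2 * Real.pi))).withDensity (fun θ => ENNReal.ofReal (h θ))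
    have hint : Integrable h (volume.restrict (Set.Ioc 0 (2 * Real.pi))) :=
      (hcont.integrableOn_Icc).mono_set Set.Ioc_subset_Icc_self
    have hfin : IsFiniteMeasure ν := isFiniteMeasure_withDensity_ofReal hint.2
    have hrep : ∀ w ∈ Metric.ball (0:ℂ) 1,
      (g (r * w)).im = ∫ θ : ℝ, ((circleMap 0 1 θ + w) / (circleMap 0 1 θ - w)).re ∂ν := by
      intro w hw
      have hd : DiffContOnCl ℂ (fun w => g (r * w)) (Metric.ball 0 1) := by
        apply DifferentiableOn.diffContOnCl
        rw [closure_ball _ one_ne_zero]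
        exact hg.comp (by fun_prop) hmaps
      have := hd.circleAverage_re_herglotzRieszKernel_smul' hw
      have h2 := congrArg Complex.im this
      rw [← h2, Real.circleAverage_def]
      have hne : ∀ θ, circleMap (0:ℂ) 1 θ - w ≠ 0 := by
        intro θ h0
        rw [sub_eq_zero] at h0
        rw [← h0] at hw
        simp at hw
      have hci : Continuous (fun θ : ℝ => ((circleMap 0 1 θ - 0 + (w - 0)) / (circleMap 0 1 θ - 0 - (w-0))).re • g (r * circleMap 0 1 θ)) := by
        refine Continuous.smul (Complex.continuous_re.comp ?_) ?_
        · exact Continuous.div (by fun_prop) (by fun_prop) (by simpa using hne)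
        · exact hg.continuousOn.comp_continuous (by fun_prop) (fun θ => hmaps _ (hcm θ))
      rw [Complex.smul_im, ← Complex.imCLM_apply, ← ContinuousLinearMap.intervalIntegral_comp_comm _ (hci.intervalIntegrable _ _)]
      rw [intervalIntegral.integral_of_le (by positivity), smul_eq_mul, ← integral_const_mul]
      rw [integral_withDensity_eq_integral_toReal_smul (by fun_prop) (by simp)]
      refine integral_congr_ae (ae_of_all _ fun θ => ?_)
      simp only [ENNReal.toReal_ofReal (hnn θ), Complex.imCLM_apply, Complex.smul_im, smul_eq_mul, sub_zero]
      simp only [hh]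
      ring
    let N : FiniteMeasure ℝ := ⟨ν, hfin⟩
    have hN : (N : Measure ℝ) = ν := rfl
    refine ⟨N, ?_, ?_, hrep⟩
    · have h0 := hrep 0 (by simp)
      have h1 : ∀ θ : ℝ, ((circleMap 0 1 θ + 0) / (circleMap 0 1 θ - 0) : ℂ).re = 1 := by
        intro θ
        have : circleMap (0:ℂ) 1 θ ≠ 0 := circleMap_ne_center one_ne_zero
        simp [this]
      simp only [h1, mul_zero, integral_const, smul_eq_mul, mul_one] at h0
      rw [h0]
      rw [← ENNReal.coe_le_coe, FiniteMeasure.ennreal_mass, hN]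
      exact (ENNReal.ofReal_toReal (measure_ne_top ν _)).ge
    · rw [FiniteMeasure.null_iff_toMeasure_null, hN]
      refine withDensity_absolutelyContinuous _ _ ?_
      rw [Measure.restrict_apply (by measurability)]
      convert measure_empty (μ := (volume : Measure ℝ))
      ext x; simp; grind
  choose! ν hν1 hν2 hν3 using key
  have hcomp := isCompact_setOfPred_finiteMeasure_le_of_isCompact (Real.toNNReal (g 0).im)
    (isCompact_Icc : IsCompact (Set.Icc 0 (2 * Real.pi)))
  let U : Ultrafilter ℝ := Ultrafilter.of (𝓝[<] 1)
  have hU : (U : Filter ℝ) ≤ 𝓝[<] 1 := Ultrafilter.of_le _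
  have hev : ∀ᶠ r in (U : Filter ℝ), r ∈ Set.Ioo (0:ℝ) 1 :=
    hU (Ioo_mem_nhdsLT one_pos)
  obtain ⟨ν₀, -, hν₀⟩ := hcomp.ultrafilter_le_nhds (U.map ν) (by
    rw [le_principal_iff]
    refine Ultrafilter.mem_map.2 ?_
    filter_upwards [hev] with r hr
    exact ⟨hν1 r hr, hν2 r hr⟩)
  have hlim : Tendsto ν U (𝓝 ν₀) := hν₀
  refine ⟨ν₀, inferInstance, fun w hw => ?_⟩
  have hne : ∀ θ, circleMap (0:ℂ) 1 θ - w ≠ 0 := by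
    intro θ h0
    rw [sub_eq_zero] at h0
    rw [← h0] at hw
    simp at hw
  have hw' : ‖w‖ < 1 := by simpa using hw
  let φ : BoundedContinuousFunction ℝ ℝ := BoundedContinuousFunction.ofNormedAddCommGroup
    (fun θ : ℝ => ((circleMap 0 1 θ + w) / (circleMap 0 1 θ - w)).re)
    (Complex.continuous_re.comp (Continuous.div (by fun_prop) (by fun_prop) hne))
    (2 / (1 - ‖w‖)) (by
      intro θ
      refine (Complex.abs_re_le_norm _).trans ?_
      rw [norm_div]
      have h1 : ‖circleMap 0 1 θ‖ = 1 := by simp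
      have := norm_add_le (circleMap 0 1 θ) w
      have := norm_sub_norm_le (circleMap 0 1 θ) w
      gcongr
      · linarith
      · linarith)
  have h1 := (FiniteMeasure.tendsto_iff_forall_integral_tendsto.1 hlim) φ
  have h2 : Tendsto (fun r : ℝ => (g (r * w)).im) U (𝓝 (g w).im) := by
    have hc : ContinuousAt g w := (hg.differentiableAt (Metric.isOpen_ball.mem_nhds hw)).continuousAt
    have : Tendsto (fun r : ℝ => (r:ℂ) * w) U (𝓝 w) := by
      have : Tendsto (fun r : ℝ => (r:ℂ) * w) (𝓝 1) (𝓝 (((1:ℝ):ℂ) * w)) :=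
        Continuous.tendsto (by fun_prop) _
      simp only [Complex.ofReal_one, one_mul] at this
      exact this.mono_left (hU.trans nhdsWithin_le_nhds)
    exact (Complex.continuous_im.tendsto _).comp (hc.tendsto.comp this)
  refine tendsto_nhds_unique h2 (h1.congr' ?_)
  filter_upwards [hev] with r hr
  exact (hν3 r hr w hw).symm

lemma hz_ker_one (z : ℂ) (hz : 0 < z.im) :
    ((1 + (z - Complex.I) / (z + Complex.I)) / (1 - (z - Complex.I) / (z + Complex.I))).re = z.im := by
  have h : z + Complex.I ≠ 0 := by
    intro h; have := congrArg Complex.im h; simp at this; linarith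
  have h2 : (1 + (z - Complex.I) / (z + Complex.I)) / (1 - (z - Complex.I) / (z + Complex.I))
      = -Complex.I * z := by
    have hI := Complex.I_ne_zero
    have e1 : 1 + (z - Complex.I) / (z + Complex.I) = 2 * z / (z + Complex.I) := by
      field_simp; ring
    have e2 : 1 - (z - Complex.I) / (z + Complex.I) = 2 * Complex.I / (z + Complex.I) := by
      field_simp; ring
    rw [e1, e2, div_div_div_cancel_right₀ h, div_eq_iff (by simp)]
    linear_combination (2 * z) * Complex.I_sq
  rw [h2]; simp

lemma hz_ker_real (u : ℝ) (z : ℂ) (hz : 0 < z.im) :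
    ((((u - Complex.I) / (u + Complex.I)) + (z - Complex.I) / (z + Complex.I)) /
      (((u - Complex.I) / (u + Complex.I)) - (z - Complex.I) / (z + Complex.I))).re
      = z.im * (1 + u ^ 2) / Complex.normSq (u - z) := by
  have h : z + Complex.I ≠ 0 := by
    intro h; have := congrArg Complex.im h; simp at this; linarith
  have hu : (u : ℂ) + Complex.I ≠ 0 := by
    intro h; have := congrArg Complex.im h; simp at this
  have huz : (u : ℂ) - z ≠ 0 := by
    intro h; have := congrArg Complex.im h; simp at this; linarith
  have hI := Complex.I_ne_zero
  have e1 : ((u - Complex.I) / (u + Complex.I)) + (z - Complex.I) / (z + Complex.I)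
      = (2 * (1 + u * z)) / ((u + Complex.I) * (z + Complex.I)) := by
    field_simp
    linear_combination (-2) * Complex.I_sq
  have e2 : ((u - Complex.I) / (u + Complex.I)) - (z - Complex.I) / (z + Complex.I)
      = (2 * Complex.I * (u - z)) / ((u + Complex.I) * (z + Complex.I)) := by
    field_simp
    ring
  have e3 : (2 * (1 + u * z)) / (2 * Complex.I * (u - z)) = -Complex.I * ((1 + u * z) / (u - z)) := by
    field_simp
    linear_combination (1 + u * z) * Complex.I_sq
  rw [e1, e2, div_div_div_cancel_right₀ (mul_ne_zero hu h), e3]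
  have hn : Complex.normSq (u - z) ≠ 0 := by simpa using huz
  simp [Complex.div_im]
  field_simp
  ring

lemma hz_half (f : ℂ → ℂ)
    (hf : DifferentiableOn ℂ f {z : ℂ | 0 < z.im})
    (him : ∀ z : ℂ, 0 < z.im → 0 ≤ (f z).im) :
    ∃ (ρ : Measure ℝ) (b : ℝ), IsFiniteMeasure ρ ∧ 0 ≤ b ∧ ∀ z : ℂ, 0 < z.im →
      (f z).im = z.im * b + ∫ u : ℝ, z.im * (1 + u ^ 2) / Complex.normSq (u - z) ∂ρ := by
  have hne : ∀ w ∈ Metric.ball (0:ℂ) 1, 1 - w ≠ 0 := by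
    intro w hw h
    rw [← sub_eq_zero.1 h] at hw; simp at hw
  have hT : ∀ w ∈ Metric.ball (0:ℂ) 1, 0 < (Complex.I * (1 + w) / (1 - w)).im := by
    intro w hw
    have h1 : 0 < Complex.normSq (1 - w) := Complex.normSq_pos.2 (hne w hw)
    have h2 : Complex.normSq w < 1 := by
      rw [Complex.normSq_eq_norm_sq]
      have : ‖w‖ < 1 := by simpa using hw
      nlinarith [norm_nonneg w]
    have : (Complex.I * (1 + w) / (1 - w)).im = (1 - Complex.normSq w) / Complex.normSq (1 - w) := by
      rw [Complex.div_im, Complex.normSq_apply w]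
      simp
      field_simp
      ring
    rw [this]
    exact div_pos (by linarith) h1
  obtain ⟨ν, hνf, hν⟩ := hz_disc (fun w => f (Complex.I * (1 + w) / (1 - w)))
    (hf.comp (DifferentiableOn.div (by fun_prop) (by fun_prop) hne) hT)
    (fun w hw => him _ (hT w hw))
  set s : Set ℝ := {θ | circleMap (0:ℂ) 1 θ = 1} with hs
  have hsm : MeasurableSet s := (isClosed_eq (continuous_circleMap 0 1) continuous_const).measurableSet
  set U : ℝ → ℝ := fun θ => (Complex.I * (1 + circleMap 0 1 θ) / (1 - circleMap 0 1 θ)).re with hU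
  have hUm : Measurable U := by
    have : Measurable (circleMap (0:ℂ) 1) := (continuous_circleMap 0 1).measurable
    exact Complex.measurable_re.comp ((measurable_const.mul (measurable_const.add this)).div (measurable_const.sub this))
  have hUs : ∀ θ ∈ sᶜ, circleMap (0:ℂ) 1 θ = ((U θ : ℂ) - Complex.I) / (U θ + Complex.I) := by
    intro θ hθ
    have h1 : 1 - circleMap (0:ℂ) 1 θ ≠ 0 := by
      intro h; exact hθ (sub_eq_zero.1 h).symm
    have hn : Complex.normSq (circleMap (0:ℂ) 1 θ) = 1 := by
      rw [Complex.normSq_eq_norm_sq]; simp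
    have hre : (U θ : ℂ) = Complex.I * (1 + circleMap 0 1 θ) / (1 - circleMap 0 1 θ) := by
      apply Complex.ext
      · simp [hU]
      · rw [Complex.ofReal_im, Complex.div_im]
        have : Complex.normSq (1 - circleMap (0:ℂ) 1 θ) ≠ 0 := by simpa using h1
        generalize circleMap (0:ℂ) 1 θ = ζ at *
        rw [Complex.normSq_apply ζ] at hn
        simp
        field_simp
        linear_combination hn
    have hu : (U θ : ℂ) + Complex.I ≠ 0 := by
      intro h; have := congrArg Complex.im h; simp at this
    rw [eq_div_iff hu, hre]
    field_simp
    ring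
  refine ⟨(ν.restrict sᶜ).map U, ν.real s, inferInstance, measureReal_nonneg, fun z hz => ?_⟩
  have hzi : z + Complex.I ≠ 0 := by
    intro h; have := congrArg Complex.im h; simp at this; linarith
  have hw : (z - Complex.I) / (z + Complex.I) ∈ Metric.ball (0:ℂ) 1 := by
    rw [mem_ball_zero_iff, norm_div, div_lt_one (norm_pos_iff.2 hzi)]
    rw [← sq_lt_sq₀ (norm_nonneg _) (norm_nonneg _), ← Complex.normSq_eq_norm_sq, ← Complex.normSq_eq_norm_sq,
      Complex.normSq_apply, Complex.normSq_apply]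
    simp
    nlinarith
  have hfz := hν _ hw
  have hback : Complex.I * (1 + (z - Complex.I) / (z + Complex.I)) / (1 - (z - Complex.I) / (z + Complex.I)) = z := by
    have e1 : 1 + (z - Complex.I) / (z + Complex.I) = 2 * z / (z + Complex.I) := by
      field_simp; ring
    have e2 : 1 - (z - Complex.I) / (z + Complex.I) = 2 * Complex.I / (z + Complex.I) := by
      field_simp; ring
    rw [mul_div_assoc, e1, e2, div_div_div_cancel_right₀ hzi, ← mul_div_assoc, div_eq_iff (by simp)]
    ring
  simp only [hback] at hfz
  have hne2 : ∀ θ, circleMap (0:ℂ) 1 θ - (z - Complex.I) / (z + Complex.I) ≠ 0 := by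
    intro θ h0
    rw [sub_eq_zero] at h0
    rw [← h0] at hw
    simp at hw
  have hint : Integrable (fun θ : ℝ => ((circleMap 0 1 θ + (z - Complex.I) / (z + Complex.I)) /
      (circleMap 0 1 θ - (z - Complex.I) / (z + Complex.I))).re) ν := by
    have hw' : ‖(z - Complex.I) / (z + Complex.I)‖ < 1 := by simpa using hw
    generalize (z - Complex.I) / (z + Complex.I) = w at *
    refine Integrable.of_bound (C := 2 / (1 - ‖w‖)) (Continuous.aestronglyMeasurable
      (Complex.continuous_re.comp (Continuous.div (by fun_prop) (by fun_prop) hne2))) (ae_of_all _ fun θ => ?_)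
    refine (Complex.abs_re_le_norm _).trans ?_
    rw [norm_div]
    have h1 : ‖circleMap 0 1 θ‖ = 1 := by simp
    have := norm_add_le (circleMap 0 1 θ) w
    have := norm_sub_norm_le (circleMap 0 1 θ) w
    gcongr
    · linarith
    · linarith
  rw [hfz, ← integral_add_compl hsm hint]
  congr 1
  · rw [setIntegral_congr_fun (g := fun _ => z.im) hsm]
    · simp [mul_comm]
    · intro θ hθ
      have : circleMap (0:ℂ) 1 θ = 1 := hθ
      simp only [this]
      exact hz_ker_one z hz
  · rw [integral_map hUm.aemeasurable]
    · refine setIntegral_congr_fun hsm.compl fun θ hθ => ?_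
      rw [hUs θ hθ]
      exact hz_ker_real (U θ) z hz
    · refine Continuous.aestronglyMeasurable ?_
      refine Continuous.div (by fun_prop) (Complex.continuous_normSq.comp (by fun_prop)) fun u => ?_
      simp only [ne_eq, map_eq_zero]
      intro h; have := congrArg Complex.im h; simp at this; linarith

lemma hz_sub_ne (u : ℝ) (z : ℂ) (hz : 0 < z.im) : (u : ℂ) - z ≠ 0 := by
  intro h; have := congrArg Complex.im h; simp at this; linarith

lemma hz_norm_inv_le (u : ℝ) (z : ℂ) (hz : 0 < z.im) : ‖((u : ℂ) - z)⁻¹‖ ≤ z.im⁻¹ := by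
  rw [norm_inv]
  refine inv_anti₀ hz ?_
  have := Complex.abs_im_le_norm ((u:ℂ) - z)
  simp at this
  exact (le_abs_self _).trans this

lemma hz_integrable_inv (μ : Measure ℝ) [IsFiniteMeasure μ] (z : ℂ) (hz : 0 < z.im) :
    Integrable (fun u : ℝ => ((u : ℂ) - z)⁻¹) μ := by
  refine Integrable.of_bound (C := z.im⁻¹) (Continuous.aestronglyMeasurable
    (Continuous.inv₀ (by fun_prop) (fun u => hz_sub_ne u z hz))) (ae_of_all _ fun u => hz_norm_inv_le u z hz)

lemma hz_im_inv (u : ℝ) (z : ℂ) : (((u : ℂ) - z)⁻¹).im = z.im / Complex.normSq (u - z) := by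
  simp [Complex.inv_im]

lemma hz_im_integral (μ : Measure ℝ) [IsFiniteMeasure μ] (z : ℂ) (hz : 0 < z.im) :
    (∫ u : ℝ, ((u : ℂ) - z)⁻¹ ∂μ).im = ∫ u : ℝ, z.im / Complex.normSq (u - z) ∂μ := by
  rw [← Complex.imCLM_apply, ← ContinuousLinearMap.integral_comp_comm _ (hz_integrable_inv μ z hz)]
  simp only [Complex.imCLM_apply, hz_im_inv]

lemma hz_exists_s1 (f : ℂ → ℂ) (C : ℝ) (hC : 0 < C)
    (hf : DifferentiableOn ℂ f {z : ℂ | 0 < z.im})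
    (him : ∀ z : ℂ, 0 < z.im → 0 ≤ (f z).im)
    (hbdd : ∀ z : ℂ, 0 < z.im → (f z).im ≤ C / z.im) :
    ∃ (μ : Measure ℝ) (a : ℝ), IsFiniteMeasure μ ∧ ∀ z : ℂ, 0 < z.im →
        f z = (a : ℂ) + (1 / (Real.pi : ℂ)) * ∫ u : ℝ, ((u : ℂ) - z)⁻¹ ∂μ := by
  obtain ⟨ρ, b, hρ, hb, hrep⟩ := hz_half f hf him
  have hq : ∀ (u y : ℝ), Complex.normSq ((u:ℂ) - y * Complex.I) = u ^ 2 + y ^ 2 := by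
    intro u y; simp [Complex.normSq_apply]; ring
  have hbd : ∀ y : ℝ, 0 < y → y ^ 2 * b + ∫ u : ℝ, y ^ 2 * (1 + u ^ 2) / (u ^ 2 + y ^ 2) ∂ρ ≤ C := by
    intro y hy
    have h1 := hrep (y * Complex.I) (by simpa using hy)
    have h2 := hbdd (y * Complex.I) (by simpa using hy)
    rw [h1] at h2
    simp only [hq] at h2
    simp only [Complex.mul_im, Complex.ofReal_re, Complex.I_im, Complex.ofReal_im, Complex.I_re, mul_one, mul_zero, add_zero] at h2
    rw [le_div_iff₀ hy] at h2
    calc _ = (y * b + ∫ u : ℝ, y * (1 + u ^ 2) / (u ^ 2 + y ^ 2) ∂ρ) * y := by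
            rw [add_mul, ← integral_mul_const]
            congr 1
            · ring
            · congr 1; ext u; ring
      _ ≤ C := h2
  have hnn : ∀ y : ℝ, 0 ≤ ∫ u : ℝ, y ^ 2 * (1 + u ^ 2) / (u ^ 2 + y ^ 2) ∂ρ := fun y =>
    integral_nonneg fun u => by positivity
  have hb0 : b = 0 := by
    by_contra h
    have hbp : 0 < b := lt_of_le_of_ne hb (Ne.symm h)
    have h1 := hbd (Real.sqrt (2 * C / b)) (by positivity)
    have h2 := hnn (Real.sqrt (2 * C / b))
    rw [Real.sq_sqrt (by positivity)] at h1 h2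
    rw [div_mul_cancel₀ _ h] at h1
    linarith
  have hint : Integrable (fun u : ℝ => 1 + u ^ 2) ρ := by
    refine integrable_of_tendsto (G := fun (n : ℕ) u => ((n:ℝ)+1) ^ 2 * (1 + u ^ 2) / (u ^ 2 + ((n:ℝ)+1) ^ 2)) ?_ ?_ ?_
    · refine ae_of_all _ fun u => ?_
      have h1 : Tendsto (fun n : ℕ => ((n:ℝ)+1) ^ 2) atTop atTop :=
        (tendsto_pow_atTop two_ne_zero).comp (tendsto_atTop_add_const_right _ _ tendsto_natCast_atTop_atTop)
      have h2 : Tendsto (fun n : ℕ => (1 + u ^ 2) - (1 + u ^ 2) * u ^ 2 * (u ^ 2 + ((n:ℝ)+1) ^ 2)⁻¹) atTop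
          (𝓝 ((1 + u ^ 2) - (1 + u ^ 2) * u ^ 2 * 0)) :=
        ((tendsto_inv_atTop_zero.comp (tendsto_atTop_add_const_left _ _ h1)).const_mul _).const_sub _
      simp only [mul_zero, sub_zero] at h2
      refine h2.congr fun n => ?_
      have : u ^ 2 + ((n:ℝ)+1) ^ 2 ≠ 0 := by positivity
      field_simp
      ring
    · intro n
      exact (Continuous.div (by fun_prop) (by fun_prop) fun u => by positivity).aestronglyMeasurable
    · have hle : ∀ n : ℕ, ∫⁻ u, ‖((n:ℝ)+1) ^ 2 * (1 + u ^ 2) / (u ^ 2 + ((n:ℝ)+1) ^ 2)‖ₑ ∂ρ ≤ ENNReal.ofReal C := by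
        intro n
        have hi : Integrable (fun u : ℝ => ((n:ℝ)+1) ^ 2 * (1 + u ^ 2) / (u ^ 2 + ((n:ℝ)+1) ^ 2)) ρ := by
          refine Integrable.of_bound (C := ((n:ℝ)+1) ^ 2)
            (Continuous.div (by fun_prop) (by fun_prop) fun u => by positivity).aestronglyMeasurable (ae_of_all _ fun u => ?_)
          rw [Real.norm_of_nonneg (by positivity), div_le_iff₀ (by positivity)]
          gcongr ?_ * ?_
          have : (0:ℝ) ≤ n := n.cast_nonneg
          nlinarith
        rw [← ofReal_integral_norm_eq_lintegral_enorm hi]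
        apply ENNReal.ofReal_le_ofReal
        have := hbd ((n:ℝ)+1) (by positivity)
        rw [hb0, mul_zero, zero_add] at this
        refine le_trans (le_of_eq ?_) this
        congr 1; ext u
        exact Real.norm_of_nonneg (by positivity)
      refine ne_top_of_le_ne_top (b := ENNReal.ofReal C) ENNReal.ofReal_ne_top ?_
      refine liminf_le_of_frequently_le' (Frequently.of_forall hle)
  set μ : Measure ℝ := ρ.withDensity (fun u => ENNReal.ofReal (Real.pi * (1 + u ^ 2))) with hμ
  have hμf : IsFiniteMeasure μ := isFiniteMeasure_withDensity_ofReal (hint.const_mul _).2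
  set S : ℂ → ℂ := fun z => (1 / (Real.pi : ℂ)) * ∫ u : ℝ, ((u : ℂ) - z)⁻¹ ∂μ with hS
  have hopen : IsOpen {z : ℂ | 0 < z.im} := isOpen_lt continuous_const Complex.continuous_im
  have hSd : DifferentiableOn ℂ S {z : ℂ | 0 < z.im} := by
    intro z hz
    refine DifferentiableAt.differentiableWithinAt ?_
    refine DifferentiableAt.const_mul ?_ _
    have := (hasDerivAt_resolventTransform (μ := μ) z (by
      rintro ⟨x, -, rfl⟩
      simp at hz)).differentiableAt
    refine this.congr_of_eventuallyEq (Eventually.of_forall fun w => ?_)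
    simp [resolventTransform_def, resolvent, Ring.inverse_eq_inv']
  have hSim : ∀ z : ℂ, 0 < z.im → (f z).im = (S z).im := by
    intro z hz
    have e : (1 / (Real.pi : ℂ)) = ((1 / Real.pi : ℝ) : ℂ) := by push_cast; rfl
    rw [hrep z hz, hb0, hS]
    simp only [e, Complex.im_ofReal_mul]
    rw [hz_im_integral μ z hz, hμ, integral_withDensity_eq_integral_toReal_smul (by fun_prop) (by simp),
      mul_zero, zero_add, ← integral_const_mul]
    congr 1; ext u
    rw [ENNReal.toReal_ofReal (by positivity), smul_eq_mul]
    field_simp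
  have han : AnalyticOnNhd ℂ (fun z => f z - S z) {z : ℂ | 0 < z.im} := (hf.sub hSd).analyticOnNhd hopen
  have hconn : IsConnected {z : ℂ | 0 < z.im} :=
    ⟨⟨Complex.I, by simp⟩, (convex_halfSpace_im_gt 0).isPreconnected⟩
  obtain ⟨a, ha⟩ := han.eq_const_add_im_mul_I_of_re_eq_const (c₀ := 0)
    (fun z hz => by simp [hSim z hz]) hopen hconn
  refine ⟨μ, a, hμf, fun z hz => ?_⟩
  have := ha z hz
  simp only [Complex.ofReal_zero, zero_mul, add_zero] at this
  rw [← this]; simp [hS]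

open ProbabilityTheory in
lemma hz_charFun_cauchy (y : NNReal) (hy : y ≠ 0) (t : ℝ) :
    charFun (cauchyMeasure 0 y) t = charFun (cauchyMeasure 0 1) (y * t) := by
  have hr : ∀ (c : NNReal), c ≠ 0 → ∀ t : ℝ, charFun (cauchyMeasure 0 c) t
      = ∫ x : ℝ, (cauchyPDFReal 0 c x) • Complex.exp (t * x * Complex.I) := by
    intro c hc t
    rw [charFun_apply_real, cauchyMeasure_of_scale_ne_zero _ hc,
      integral_withDensity_eq_integral_toReal_smul (measurable_cauchyPDF _ _) (by simp [cauchyPDF_def])]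
    congr 1; ext x
    rw [cauchyPDF_def, ENNReal.toReal_ofReal (cauchyPDF_pos _ hc _).le]
  have hy' : (0:ℝ) < y := by positivity
  rw [hr y hy, hr 1 one_ne_zero]
  have := Measure.integral_comp_mul_left (fun x : ℝ => (cauchyPDFReal 0 y x) • Complex.exp (t * x * Complex.I)) (y : ℝ)
  rw [abs_of_pos (by positivity), eq_inv_smul_iff₀ hy'.ne'] at this
  rw [← this, ← integral_smul]
  congr 1; ext x
  rw [smul_smul]
  congr 1
  · simp only [cauchyPDFReal_def]
    push_cast
    field_simp
    simp
    field_simp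
  · congr 1; push_cast; ring

open ProbabilityTheory in
lemma hz_unique_measure (μ ν : Measure ℝ) [IsFiniteMeasure μ] [IsFiniteMeasure ν]
    (h : ∀ z : ℂ, 0 < z.im → (∫ u : ℝ, ((u : ℂ) - z)⁻¹ ∂μ).im = (∫ u : ℝ, ((u : ℂ) - z)⁻¹ ∂ν).im) :
    μ = ν := by
  have hden : ∀ (y : NNReal), y ≠ 0 → ∀ (m : Measure ℝ) [IsFiniteMeasure m] (x : ℝ),
      ∫⁻ u, cauchyPDF 0 y (x - u) ∂m =
        ENNReal.ofReal (Real.pi⁻¹ * (∫ u : ℝ, ((u : ℂ) - (x + y * Complex.I))⁻¹ ∂m).im) := by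
    intro y hy m _ x
    have hy' : (0:ℝ) < y := by positivity
    have hz : 0 < ((x:ℂ) + (y:ℝ) * Complex.I).im := by simpa using hy'
    have e : ∀ u : ℝ, Real.pi⁻¹ * (((u : ℂ) - (x + (y:ℝ) * Complex.I))⁻¹).im = cauchyPDFReal 0 y (x - u) := by
      intro u
      rw [hz_im_inv, cauchyPDFReal_def, Complex.normSq_apply]
      simp
      rw [div_eq_mul_inv, mul_assoc]; congr 3; ring
    have hi := ((hz_integrable_inv m _ hz).im).const_mul Real.pi⁻¹
    have e2 : Real.pi⁻¹ * (∫ u : ℝ, ((u : ℂ) - (x + (y:ℝ) * Complex.I))⁻¹ ∂m).im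
        = ∫ u : ℝ, cauchyPDFReal 0 y (x - u) ∂m := by
      rw [← Complex.imCLM_apply, ← ContinuousLinearMap.integral_comp_comm _ (hz_integrable_inv m _ hz), ← integral_const_mul]
      congr 1; ext u; exact e u
    change _ = ENNReal.ofReal (Real.pi⁻¹ * (∫ u : ℝ, ((u : ℂ) - (x + (y:ℝ) * Complex.I))⁻¹ ∂m).im)
    rw [e2, ofReal_integral_eq_lintegral_ofReal]
    · rfl
    · exact hi.congr (ae_of_all _ e)
    · exact ae_of_all _ fun u => (cauchyPDF_pos _ hy _).le
  have hconv : ∀ (y : NNReal), y ≠ 0 → ∀ (m : Measure ℝ) [IsFiniteMeasure m] (g : ℝ → ENNReal), Measurable g →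
      ∫⁻ x, g x ∂(m ∗ cauchyMeasure 0 y) = ∫⁻ x, g x * ∫⁻ u, cauchyPDF 0 y (x - u) ∂m := by
    intro y hy m _ g hg
    have hp := measurable_cauchyPDF 0 y
    rw [Measure.lintegral_conv hg, cauchyMeasure_of_scale_ne_zero _ hy]
    have : ∀ u : ℝ, ∫⁻ x, g (u + x) ∂(volume.withDensity (cauchyPDF 0 y))
        = ∫⁻ x, g x * cauchyPDF 0 y (x - u) := by
      intro u
      rw [lintegral_withDensity_eq_lintegral_mul _ hp (by fun_prop),
        ← lintegral_add_left_eq_self (fun x => g x * cauchyPDF 0 y (x - u)) u]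
      congr 1; ext x
      simp [mul_comm]
    simp only [this]
    rw [lintegral_lintegral_swap (by fun_prop)]
    congr 1; ext x
    rw [lintegral_const_mul _ (by fun_prop)]
  have hm : ∀ (y : NNReal), y ≠ 0 → μ ∗ cauchyMeasure 0 y = ν ∗ cauchyMeasure 0 y := by
    intro y hy
    refine Measure.ext_of_lintegral _ fun g hg => ?_
    rw [hconv y hy μ g hg, hconv y hy ν g hg]
    congr 1; ext x
    have hz : 0 < ((x:ℂ) + (y:ℝ) * Complex.I).im := by
      have hy' : (0:ℝ) < y := by positivity
      simpa using hy'
    rw [hden y hy μ, hden y hy ν]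
    have := h _ hz
    congr 3
  refine Measure.ext_of_charFun (funext fun t => ?_)
  have hc : Continuous (charFun (cauchyMeasure 0 1)) := continuous_charFun
  have hlim : Tendsto (fun y : NNReal => charFun (cauchyMeasure 0 1) (y * t)) (𝓝[≠] 0) (𝓝 1) := by
    have h1 : Continuous (fun y : NNReal => charFun (cauchyMeasure 0 1) (y * t)) := by fun_prop
    have := h1.tendsto 0
    simp at this
    exact this.mono_left nhdsWithin_le_nhds
  have hev := (hlim.eventually_ne one_ne_zero).and self_mem_nhdsWithin
  obtain ⟨y, hy1, hy2⟩ := hev.exists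
  have hy2 : y ≠ 0 := hy2
  have h3 := congrArg (fun m => charFun m t) (hm y hy2)
  simp only [charFun_conv] at h3
  rw [hz_charFun_cauchy y hy2] at h3
  exact mul_right_cancel₀ hy1 h3

lemma hz_tendsto (μ : Measure ℝ) [IsFiniteMeasure μ] (a : ℝ) :
    Tendsto (fun y : ℝ => (a : ℂ) + (1 / (Real.pi : ℂ)) * ∫ u : ℝ, ((u : ℂ) - y * Complex.I)⁻¹ ∂μ) atTop (𝓝 a) := by
  have h : Tendsto (fun y : ℝ => ∫ u : ℝ, ((u : ℂ) - y * Complex.I)⁻¹ ∂μ) atTop (𝓝 0) := by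
    refine squeeze_zero_norm' (a := fun y : ℝ => y⁻¹ * μ.real Set.univ) ?_ ?_
    · filter_upwards [eventually_gt_atTop 0] with y hy
      refine norm_integral_le_of_norm_le_const (ae_of_all _ fun u => ?_)
      simpa using hz_norm_inv_le u (y * Complex.I) (by simpa using hy)
    · simpa using tendsto_inv_atTop_zero.mul_const (μ.real Set.univ)
  simpa using (h.const_mul (1 / (Real.pi : ℂ))).const_add (a : ℂ)

/-- Herglotz theorem for holomorphic functions mapping the upper half-plane
into the closed upper half-plane, with decay `Im f(x+iy) ≤ C/y`: there are a
unique finite positive Borel measure `μ` on `ℝ` and a unique real `a` with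
`f(z) = a + (1/π) ∫ (u - z)⁻¹ dμ(u)`. -/
theorem herglotz_holomorphic
    (f : ℂ → ℂ) (C : ℝ) (hC : 0 < C)
    (hf : DifferentiableOn ℂ f {z : ℂ | 0 < z.im})
    (him : ∀ z : ℂ, 0 < z.im → 0 ≤ (f z).im)
    (hbdd : ∀ z : ℂ, 0 < z.im → (f z).im ≤ C / z.im) :
    ∃! p : Measure ℝ × ℝ, IsFiniteMeasure p.1 ∧
      ∀ z : ℂ, 0 < z.im →
        f z = (p.2 : ℂ) + (1 / (Real.pi : ℂ)) * ∫ u : ℝ, ((u : ℂ) - z)⁻¹ ∂p.1 := by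
  obtain ⟨μ, a, hμ, hrep⟩ := hz_exists_s1 f C hC hf him hbdd
  refine ⟨(μ, a), ⟨hμ, hrep⟩, ?_⟩
  rintro ⟨ν, b⟩ ⟨hν, hrep2⟩
  simp only at hν hrep2
  have hab : b = a := by
    have h1 := hz_tendsto μ a
    have h2 := hz_tendsto ν b
    have : (b : ℂ) = a := by
      refine tendsto_nhds_unique h2 (h1.congr' ?_)
      filter_upwards [eventually_gt_atTop 0] with y hy
      rw [← hrep _ (by simpa using hy), ← hrep2 _ (by simpa using hy)]
    exact_mod_cast this
  subst hab
  congr 1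
  refine hz_unique_measure ν μ fun z hz => ?_
  have h3 := (hrep2 z hz).symm.trans (hrep z hz)
  have h4 := mul_left_cancel₀ (by simp [Real.pi_ne_zero]) (add_left_cancel h3)
  rw [h4]
end

section
/- For a function f : ℝ → ℂ the following are equivalent: (i) f is continuous and positive definite, i.e. for every n ≥ 1, all points x₁,…,xₙ ∈ ℝ and all scalars c₁,…,cₙ ∈ ℂ one has Σ_{j,k=1}^n f(x_k − x_j) c_j conj(c_k) ∈ [0,∞); (ii) there exists a finite positive Borel measure μ on ℝ such that f(ω) = ∫_ℝ e^{−iωx} dμ(x) for all ω ∈ ℝ. -/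
open MeasureTheory ProbabilityTheory Filter Topology

def IsPD (f : ℝ → ℂ) : Prop := ∀ (n : ℕ) (x : Fin n → ℝ) (c : Fin n → ℂ),
        0 ≤ (∑ j : Fin n, ∑ k : Fin n, f (x k - x j) * c j * (starRingEnd ℂ) (c k)).re ∧
        (∑ j : Fin n, ∑ k : Fin n, f (x k - x j) * c j * (starRingEnd ℂ) (c k)).im = 0

lemma pd_zero {f : ℝ → ℂ} (h : IsPD f) : 0 ≤ (f 0).re ∧ (f 0).im = 0 := by
  simpa using h 1 (fun _ => 0) (fun _ => 1)

lemma pd_two {f : ℝ → ℂ} (h : IsPD f) (x : ℝ) (b : ℂ) (hb : ‖b‖ = 1) :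
    0 ≤ (2 * f 0 + f x * (starRingEnd ℂ) b + f (-x) * b).re ∧
    (2 * f 0 + f x * (starRingEnd ℂ) b + f (-x) * b).im = 0 := by
  have := h 2 ![0, x] ![1, b]
  have hb' : b * (starRingEnd ℂ) b = 1 := by
    rw [Complex.mul_conj, Complex.normSq_eq_norm_sq, hb]; simp
  have e : (∑ j : Fin 2, ∑ k : Fin 2, f (![0, x] k - ![0, x] j) * ![1, b] j *
      (starRingEnd ℂ) (![1, b] k)) = 2 * f 0 + f x * (starRingEnd ℂ) b + f (-x) * b := by
    simp [Fin.sum_univ_two]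
    linear_combination f 0 * hb'
  rw [e] at this
  exact this

lemma pd_conj {f : ℝ → ℂ} (h : IsPD f) (x : ℝ) : f (-x) = (starRingEnd ℂ) (f x) := by
  have h0 := (pd_zero h).2
  have h1 := (pd_two h x 1 (by simp)).2
  have h2 := (pd_two h x Complex.I (by simp)).2
  simp [h0] at h1 h2
  apply Complex.ext <;> simp <;> linarith

lemma pd_bound {f : ℝ → ℂ} (h : IsPD f) (x : ℝ) : ‖f x‖ ≤ (f 0).re := by
  by_cases hx : f x = 0
  · rw [hx]; simpa using (pd_zero h).1
  have hn : ‖f x‖ ≠ 0 := by simpa using hx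
  have h1 := (pd_two h x (-(f x) / ‖f x‖) (by simp [hn])).1
  have e1 : f x * (starRingEnd ℂ) (-(f x) / ‖f x‖) = ((-‖f x‖ : ℝ) : ℂ) := by
    have : f x * (starRingEnd ℂ) (f x) = (‖f x‖ : ℂ)^2 := by
      rw [Complex.mul_conj, Complex.normSq_eq_norm_sq]; simp
    have hn' : (‖f x‖ : ℂ) ≠ 0 := by exact_mod_cast hn
    simp only [map_div₀, map_neg, Complex.conj_ofReal]
    push_cast
    field_simp
    linear_combination -this
  have e2 : f (-x) * (-(f x) / ‖f x‖) = ((-‖f x‖ : ℝ) : ℂ) := by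
    rw [pd_conj h, ← Complex.conj_ofReal (-‖f x‖), ← e1]; simp
  rw [e1, e2] at h1
  simp at h1
  linarith

lemma pd_integral {F : ℝ → ℂ} (hc : Continuous F) (h : IsPD F) (γ : Measure ℝ)
    [IsProbabilityMeasure γ] :
    0 ≤ (∫ p : ℝ × ℝ, F (p.1 - p.2) ∂(γ.prod γ)).re ∧
      (∫ p : ℝ × ℝ, F (p.1 - p.2) ∂(γ.prod γ)).im = 0 := by
  set J := ∫ p : ℝ × ℝ, F (p.1 - p.2) ∂(γ.prod γ) with hJ
  have key : ∀ n : ℕ, 0 ≤ ((n : ℂ) * F 0 + n * (n - 1) * J).re ∧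
      ((n : ℂ) * F 0 + n * (n - 1) * J).im = 0 := by
    intro n
    let P : Measure (Fin n → ℝ) := Measure.pi fun _ => γ
    have hint : ∀ j k : Fin n, Integrable (fun x : Fin n → ℝ => F (x k - x j)) P := fun j k =>
      Integrable.of_bound (by fun_prop) (F 0).re (ae_of_all _ fun x => pd_bound h _)
    have hS : Integrable (fun x : Fin n → ℝ => ∑ j, ∑ k, F (x k - x j)) P :=
      integrable_finsetSum _ fun j _ => integrable_finsetSum _ fun k _ => hint j k
    have hval : ∀ j k : Fin n, ∫ x, F (x k - x j) ∂P = J + if j = k then F 0 - J else 0 := by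
      intro j k
      split_ifs with hjk
      · subst hjk; simp
      have hind : iIndepFun (fun (i : Fin n) (x : Fin n → ℝ) => x i) P :=
        iIndepFun_pi (X := fun _ => id) (fun i => aemeasurable_id)
      have h2 := (indepFun_iff_map_prod_eq_prod_map_map
        (measurable_pi_apply k).aemeasurable (measurable_pi_apply j).aemeasurable).1
        (hind.indepFun (Ne.symm hjk))
      have hm : ∀ i, P.map (fun x => x i) = γ := fun i =>
        (measurePreserving_eval (fun _ : Fin n => γ) i).map_eq
      rw [hm, hm] at h2
      rw [hJ, ← h2, integral_map (by fun_prop) (by fun_prop)]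
      simp
    have hI : ∫ x, ∑ j, ∑ k, F (x k - x j) ∂P = (n : ℂ) * F 0 + n * (n - 1) * J := by
      rw [integral_finsetSum _ fun j _ => integrable_finsetSum _ fun k _ => hint j k]
      simp_rw [integral_finsetSum _ fun k _ => hint _ k, hval, Finset.sum_add_distrib]
      simp
      ring
    rw [← hI]
    constructor
    · have := integral_re hS
      simp only [RCLike.re_eq_complex_re] at this
      rw [← this]
      exact integral_nonneg fun x => by simpa using (h n x (fun _ => 1)).1
    · have := integral_im hS
      simp only [RCLike.im_eq_complex_im] at this
      rw [← this]
      rw [integral_congr_ae (g := 0) (ae_of_all _ fun x => by simpa using (h n x (fun _ => 1)).2)]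
      simp
  have key' : ∀ n : ℕ, 0 ≤ (n : ℝ) * (F 0).re + n * (n - 1) * J.re ∧
      (n : ℝ) * (F 0).im + n * (n - 1) * J.im = 0 := by
    intro n
    have := key n
    have e : (n : ℂ) * F 0 + n * (n - 1) * J = ((n : ℝ) : ℂ) * F 0 + ((n * (n - 1) : ℝ) : ℂ) * J := by
      push_cast; rfl
    rw [e] at this
    simpa only [Complex.add_re, Complex.add_im, Complex.re_ofReal_mul, Complex.im_ofReal_mul] using this
  constructor
  · by_contra! hneg
    obtain ⟨m, hm⟩ := exists_nat_gt ((F 0).re / (-J.re))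
    rw [div_lt_iff₀ (by linarith)] at hm
    have := (key' (m + 1)).1
    push_cast at this
    have h3 : 0 ≤ ((m : ℝ) + 1) * ((F 0).re + m * J.re) := by linarith
    have h4 := nonneg_of_mul_nonneg_right h3 (by positivity)
    linarith
  · have := (key' 2).2
    rw [(pd_zero h).2] at this
    norm_num at this
    exact this

lemma pd_mod {f : ℝ → ℂ} (h : IsPD f) (w : ℝ) :
    IsPD (fun u => f u * Complex.exp (-(w * u * Complex.I))) := by
  intro n x c
  have := h n x (fun j => c j * Complex.exp (w * x j * Complex.I))
  have e : (∑ j : Fin n, ∑ k : Fin n, f (x k - x j) * (c j * Complex.exp (w * x j * Complex.I)) *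
      (starRingEnd ℂ) (c k * Complex.exp (w * x k * Complex.I))) =
      ∑ j : Fin n, ∑ k : Fin n, (f (x k - x j) *
        Complex.exp (-(w * (x k - x j : ℝ) * Complex.I))) * c j * (starRingEnd ℂ) (c k) := by
    refine Finset.sum_congr rfl fun j _ => Finset.sum_congr rfl fun k _ => ?_
    have : Complex.exp (-(w * (x k - x j : ℝ) * Complex.I)) =
      Complex.exp (w * x j * Complex.I) * Complex.exp (-(w * x k * Complex.I)) := by
      rw [← Complex.exp_add]; push_cast; ring_nf
    rw [this, map_mul, ← Complex.exp_conj]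
    simp
    ring
  rw [e] at this
  exact this

lemma pd_gauss {F : ℝ → ℂ} (hc : Continuous F) (h : IsPD F) (v : NNReal) :
    0 ≤ (∫ u, F u ∂(gaussianReal 0 v)).re ∧ (∫ u, F u ∂(gaussianReal 0 v)).im = 0 := by
  have := pd_integral hc h (gaussianReal 0 (v / 2))
  have e : ∫ p : ℝ × ℝ, F (p.1 - p.2) ∂((gaussianReal 0 (v/2)).prod (gaussianReal 0 (v/2))) =
      ∫ u, F u ∂(gaussianReal 0 v) := by
    have h1 : gaussianReal 0 v = (gaussianReal 0 (v/2)).conv (gaussianReal 0 (v/2)) := by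
      rw [gaussianReal_conv_gaussianReal]; simp
    have hi : ∀ g : ℝ × ℝ → ℝ, Continuous g → Integrable (fun p => F (g p))
        ((gaussianReal 0 (v/2)).prod (gaussianReal 0 (v/2))) := fun g hg =>
      Integrable.of_bound (by fun_prop) (F 0).re (ae_of_all _ fun x => pd_bound h _)
    rw [h1, Measure.conv, integral_map (by fun_prop) (by fun_prop),
      integral_prod _ (hi _ (by fun_prop)), integral_prod _ (hi _ (by fun_prop))]
    congr 1
    ext x
    have h2 : gaussianReal 0 (v/2) = (gaussianReal 0 (v/2)).map (fun x => -x) := by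
      rw [gaussianReal_map_neg]; simp
    conv_rhs => rw [h2, integral_map (by fun_prop) (by fun_prop)]
    simp [sub_eq_add_neg]
  rw [e] at this
  exact this

lemma approx_measure {f : ℝ → ℂ} (hc : Continuous f) (h : IsPD f) (s : NNReal) (hs : s ≠ 0) :
    ∃ ν : Measure ℝ, IsFiniteMeasure ν ∧ ∀ t : ℝ, charFun ν t =
      ∫ u, f u * Real.exp (-u ^ 2 / (2 * s)) ∂(gaussianReal t s⁻¹) := by
  set G := gaussianReal 0 s with hG
  let H : ℝ → ℂ := fun w => ∫ u, f u * Complex.exp (-(w * u * Complex.I)) ∂G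
  have hH : ∀ w, 0 ≤ (H w).re ∧ (H w).im = 0 := fun w =>
    pd_gauss (F := fun u => f u * Complex.exp (-(w * u * Complex.I))) (by fun_prop) (pd_mod h w) s
  have hn : ∀ w u : ℝ, ‖Complex.exp (-(w * u * Complex.I))‖ = 1 := fun w u => by
    rw [show -((w : ℂ) * u * Complex.I) = ((-(w * u) : ℝ) : ℂ) * Complex.I by push_cast; ring]
    exact Complex.norm_exp_ofReal_mul_I _
  have hn' : ∀ w u : ℝ, ‖Complex.exp (w * u * Complex.I)‖ = 1 := fun w u => by
    rw [show ((w : ℂ) * u * Complex.I) = (((w * u) : ℝ) : ℂ) * Complex.I by push_cast; ring]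
    exact Complex.norm_exp_ofReal_mul_I _
  have hHm : Measurable H := by
    have : StronglyMeasurable H := by
      apply StronglyMeasurable.integral_prod_right
        (f := fun (w u : ℝ) => f u * Complex.exp (-(w * u * Complex.I)))
      apply Continuous.stronglyMeasurable
      simp only [Function.uncurry_def]
      fun_prop
    exact this.measurable
  have hHb : ∀ w, (H w).re ≤ (f 0).re := fun w => by
    refine (Complex.re_le_norm _).trans ?_
    refine (norm_integral_le_of_norm_le_const (C := (f 0).re) (ae_of_all _ fun u => ?_)).trans ?_
    · rw [norm_mul, hn, mul_one]; exact pd_bound h u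
    · simp
  let C : ℝ := s
  have hC : 0 ≤ C := s.2
  let d : ℝ → NNReal := fun w => Real.toNNReal (C * (H w).re)
  have hd : ∀ w, ((d w : ℝ) : ℂ) = C * H w := fun w => by
    have h1 := hH w
    rw [Real.coe_toNNReal _ (mul_nonneg hC h1.1)]
    apply Complex.ext <;> simp [h1.2]
  have hdm : Measurable d := by
    have := Complex.measurable_re.comp hHm
    exact (this.const_mul C).real_toNNReal
  refine ⟨G.withDensity (fun w => (d w : ENNReal)), ?_, fun t => ?_⟩
  · apply isFiniteMeasure_withDensity
    refine ((lintegral_mono (g := fun _ => ENNReal.ofReal (C * (f 0).re)) fun w => ?_).trans_lt ?_).ne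
    · exact ENNReal.ofReal_le_ofReal (mul_le_mul_of_nonneg_left (hHb w) hC)
    · simp
  · rw [charFun_apply_real, integral_withDensity_eq_integral_smul hdm]
    have e1 : ∀ w : ℝ, d w • Complex.exp (t * w * Complex.I) =
        C * ∫ u, f u * Complex.exp (-(w * u * Complex.I)) * Complex.exp (t * w * Complex.I) ∂G := by
      intro w
      rw [integral_mul_const, ← mul_assoc, ← hd w]
      rfl
    simp_rw [e1]
    rw [integral_const_mul, integral_integral_swap]
    swap
    · refine Integrable.of_bound ?_ (f 0).re (ae_of_all _ fun p => ?_)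
      · simp only [Function.uncurry_def]
        exact Continuous.aestronglyMeasurable (by fun_prop)
      · simp only [Function.uncurry_def]
        rw [norm_mul, norm_mul, hn, hn', mul_one, mul_one]
        exact pd_bound h _
    have e2 : ∀ u : ℝ, ∫ w, f u * Complex.exp (-(w * u * Complex.I)) *
        Complex.exp (t * w * Complex.I) ∂G = f u * Complex.exp (- s * (t - u) ^ 2 / 2) := by
      intro u
      have := charFun_gaussianReal (μ := 0) (v := s) (t - u)
      rw [charFun_apply_real] at this
      simp_rw [mul_assoc (f u)]
      rw [integral_const_mul]
      congr 1
      calc _ = _ := ?_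
        _ = _ := this
        _ = _ := by congr 1; push_cast; ring
      congr 1; ext w
      rw [← Complex.exp_add]; congr 1; push_cast; ring
    simp_rw [e2]
    rw [hG, integral_gaussianReal_eq_integral_smul hs,
      integral_gaussianReal_eq_integral_smul (inv_ne_zero hs), ← integral_const_mul]
    congr 1
    ext u
    have hs' : (0 : ℝ) < s := by positivity
    have e3 : C * gaussianPDFReal 0 s u * Real.exp (- s * (t - u) ^ 2 / 2) =
        gaussianPDFReal t s⁻¹ u * Real.exp (-u ^ 2 / (2 * s)) := by
      simp only [gaussianPDFReal, C]
      have e4 : (s : ℝ) * (√(2 * Real.pi * s))⁻¹ = (√(2 * Real.pi * (s⁻¹ : NNReal)))⁻¹ := by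
        rw [NNReal.coe_inv, Real.sqrt_mul (x := 2 * Real.pi) (by positivity),
          Real.sqrt_mul (x := 2 * Real.pi) (by positivity), Real.sqrt_inv]
        have := Real.mul_self_sqrt hs'.le
        have : √(s:ℝ) ≠ 0 := by positivity
        have : √(2 * Real.pi) ≠ 0 := by positivity
        field_simp
        nlinarith
      rw [← mul_assoc, e4, mul_assoc _ (Real.exp _), mul_assoc _ (Real.exp _), ← Real.exp_add,
        ← Real.exp_add]
      congr 2
      rw [NNReal.coe_inv]
      field_simp
      ring
    have e5 := congrArg (fun r : ℝ => (r : ℂ)) e3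
    push_cast at e5
    simp only [Complex.real_smul]
    push_cast
    linear_combination f u * e5

lemma approx_tendsto {f : ℝ → ℂ} (hc : Continuous f) (h : IsPD f) (t : ℝ) :
    Tendsto (fun n : ℕ => ∫ u, f u * Real.exp (-u ^ 2 / (2 * ((n + 1 : NNReal) ^ 2 : NNReal)))
      ∂(gaussianReal t ((n + 1 : NNReal) ^ 2)⁻¹)) atTop (𝓝 (f t)) := by
  have e : ∀ n : ℕ, gaussianReal t ((n + 1 : NNReal) ^ 2)⁻¹ =
      (gaussianReal 0 1).map (fun z => (1 / ((n : ℝ) + 1)) * z + t) := by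
    intro n
    have h1 := gaussianReal_map_const_mul (μ := 0) (v := 1) (1 / ((n : ℝ) + 1))
    have h2 := gaussianReal_map_add_const (μ := 0) (v := ((n + 1 : NNReal) ^ 2)⁻¹) t
    have h3 : gaussianReal 0 ((n + 1 : NNReal) ^ 2)⁻¹ =
        (gaussianReal 0 1).map (fun z => (1 / ((n : ℝ) + 1)) * z) := by
      rw [h1]
      congr 1
      · simp
      · ext; simp
    rw [zero_add] at h2
    rw [← h2, h3, Measure.map_map (by fun_prop) (by fun_prop)]
    rfl
  have hlim := tendsto_one_div_add_atTop_nhds_zero_nat (𝕜 := ℝ)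
  have : f t = ∫ z, f t ∂(gaussianReal 0 1) := by simp
  rw [this]
  simp_rw [e]
  have e' : ∀ n : ℕ, ∫ u, f u * Real.exp (-u ^ 2 / (2 * ((n + 1 : NNReal) ^ 2 : NNReal)))
      ∂((gaussianReal 0 1).map (fun z => (1 / ((n : ℝ) + 1)) * z + t)) =
      ∫ z, f ((1 / ((n : ℝ) + 1)) * z + t) *
        Real.exp (-((1 / ((n : ℝ) + 1)) * z + t) ^ 2 / 2 * (1 / ((n : ℝ) + 1)) ^ 2)
        ∂(gaussianReal 0 1) := by
    intro n
    rw [integral_map (by fun_prop) (Continuous.aestronglyMeasurable (by fun_prop))]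
    congr 1; ext z
    congr 3
    push_cast
    field_simp
  simp_rw [e']
  refine tendsto_integral_of_dominated_convergence (fun _ => (f 0).re) (fun n => ?_)
    (integrable_const _) (fun n => ae_of_all _ fun z => ?_) (ae_of_all _ fun z => ?_)
  · exact Continuous.aestronglyMeasurable (by fun_prop)
  · rw [norm_mul, Complex.norm_real, Real.norm_eq_abs, Real.abs_exp]
    refine (mul_le_of_le_one_right (norm_nonneg _) ?_).trans (pd_bound h _)
    rw [Real.exp_le_one_iff, neg_div, neg_mul]
    simp only [Left.neg_nonpos_iff]
    positivity
  · have hg : Continuous fun a : ℝ => f (a * z + t) * Real.exp (-(a * z + t) ^ 2 / 2 * a ^ 2) := by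
      fun_prop
    have := (hg.tendsto 0).comp hlim
    simp only [zero_mul, zero_add] at this
    rw [show f t = f t * Real.exp (-t ^ 2 / 2 * 0 ^ 2) by simp]
    exact this

lemma exists_charFun {f : ℝ → ℂ} (hc : Continuous f) (h : IsPD f) :
    ∃ μ : Measure ℝ, IsFiniteMeasure μ ∧ ∀ t, f t = charFun μ t := by
  obtain ⟨h0, h0'⟩ := pd_zero h
  rcases h0.eq_or_lt with h0 | h0
  · refine ⟨0, inferInstance, fun t => ?_⟩
    have := pd_bound h t
    rw [← h0] at this
    simpa using this
  have hf0 : f 0 = ((f 0).re : ℂ) := by apply Complex.ext <;> simp [h0']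
  choose ν hfin hν using fun n : ℕ => approx_measure hc h ((n + 1 : NNReal) ^ 2) (by positivity)
  have hlim : ∀ t, Tendsto (fun n => charFun (ν n) t) atTop (𝓝 (f t)) := fun t => by
    simp_rw [hν]; exact approx_tendsto hc h t
  have hmass : Tendsto (fun n => (ν n).real Set.univ) atTop (𝓝 (f 0).re) := by
    have := (Complex.continuous_re.tendsto _).comp (hlim 0)
    simpa [Function.comp_def] using this
  obtain ⟨N, hN⟩ := eventually_atTop.1 (hmass.eventually (lt_mem_nhds h0))
  let P : ℕ → Measure ℝ := fun n => (ν (n + N) Set.univ)⁻¹ • ν (n + N)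
  have hPp : ∀ n, IsProbabilityMeasure (P n) := fun n => by
    have : NeZero (ν (n + N)) := ⟨fun h0 => by
      have := hN (n + N) (by omega)
      simp [h0] at this⟩
    exact isProbabilityMeasureSMul
  have hP : ∀ t, Tendsto (fun n => charFun (P n) t) atTop (𝓝 (f t / f 0)) := fun t => by
    have e : ∀ n, charFun (P n) t = charFun (ν (n + N)) t / ((ν (n + N)).real Set.univ : ℂ) := by
      intro n
      rw [charFun_apply, integral_smul_measure, ← charFun_apply, ENNReal.toReal_inv,
        Complex.real_smul, div_eq_inv_mul]
      simp [Measure.real]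
    simp_rw [e]
    refine ((tendsto_add_atTop_iff_nat N).2 (hlim t)).div ?_ ?_
    · rw [hf0]
      exact (Complex.continuous_ofReal.tendsto _).comp ((tendsto_add_atTop_iff_nat N).2 hmass)
    · rw [hf0]; exact_mod_cast h0.ne'
  have htight := isTightMeasureSet_of_tendsto_charFun (μ := P) (f := fun t => f t / f 0)
    (by fun_prop) hP
  let Q : ℕ → ProbabilityMeasure ℝ := fun n => ⟨P n, hPp n⟩
  have hcomp : IsCompact (closure (Set.range Q)) := by
    apply isCompact_closure_of_isTightMeasureSet
    convert htight using 1
    ext μ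
    constructor
    · rintro ⟨_, ⟨n, rfl⟩, rfl⟩; exact ⟨n, rfl⟩
    · rintro ⟨n, rfl⟩; exact ⟨Q n, ⟨n, rfl⟩, rfl⟩
  let U : Ultrafilter ℕ := Ultrafilter.of atTop
  obtain ⟨μ, -, hμ⟩ := hcomp.ultrafilter_le_nhds (U.map Q) (by
    rw [le_principal_iff]
    exact Filter.mem_map.2 (Filter.univ_mem' fun n => subset_closure ⟨n, rfl⟩))
  have hμ' : Tendsto Q (U : Filter ℕ) (𝓝 μ) := hμ
  rw [ProbabilityMeasure.tendsto_iff_forall_integral_rclike_tendsto ℂ] at hμ'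
  refine ⟨ENNReal.ofReal (f 0).re • (μ : Measure ℝ),
    Measure.smul_finite _ ENNReal.ofReal_ne_top, fun t => ?_⟩
  have h1 : f t / f 0 = charFun (μ : Measure ℝ) t := by
    refine tendsto_nhds_unique ((hP t).mono_left (Ultrafilter.of_le atTop)) ?_
    simp_rw [charFun_eq_integral_innerProbChar]
    exact hμ' (BoundedContinuousFunction.innerProbChar t)
  rw [charFun_apply, integral_smul_measure, ← charFun_apply, ← h1, ENNReal.toReal_ofReal h0.le,
    Complex.real_smul, ← hf0]
  have : f 0 ≠ 0 := by rw [hf0]; exact_mod_cast h0.ne'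
  field_simp

/-- Bochner's theorem: a function `f : ℝ → ℂ` is continuous and positive
definite iff it is the Fourier transform of a finite positive Borel measure. -/
theorem bochner_theorem (f : ℝ → ℂ) :
    (Continuous f ∧ ∀ (n : ℕ) (x : Fin n → ℝ) (c : Fin n → ℂ),
        0 ≤ (∑ j : Fin n, ∑ k : Fin n, f (x k - x j) * c j * (starRingEnd ℂ) (c k)).re ∧
        (∑ j : Fin n, ∑ k : Fin n, f (x k - x j) * c j * (starRingEnd ℂ) (c k)).im = 0) ↔
      ∃ μ : Measure ℝ, IsFiniteMeasure μ ∧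
        ∀ ω : ℝ, f ω = ∫ x : ℝ, Complex.exp (-(Complex.I * ω * x)) ∂μ := by
  have hcf : ∀ (μ : Measure ℝ) (ω : ℝ),
      ∫ x : ℝ, Complex.exp (-(Complex.I * ω * x)) ∂μ = charFun μ (-ω) := fun μ ω => by
    rw [charFun_apply_real]
    congr 1; ext x; congr 1; push_cast; ring
  constructor
  · rintro ⟨hc, h⟩
    obtain ⟨μ, hμ, hf⟩ := exists_charFun hc h
    refine ⟨μ.map ((-1 : ℝ) • ·), inferInstance, fun ω => ?_⟩
    rw [hcf, charFun_map_smul, hf]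
    simp
  · rintro ⟨μ, hμ, hf⟩
    have hf' : f = fun ω => charFun μ (-ω) := funext fun ω => by rw [hf, hcf]
    refine ⟨by rw [hf']; exact continuous_charFun.comp continuous_neg, fun n x c => ?_⟩
    have e : (∑ j : Fin n, ∑ k : Fin n, f (x k - x j) * c j * (starRingEnd ℂ) (c k)) =
        ((∫ y, ‖∑ j, c j * Complex.exp (x j * y * Complex.I)‖ ^ 2 ∂μ : ℝ) : ℂ) := by
      have hexp : ∀ a y : ℝ, ‖Complex.exp (-(Complex.I * a * y))‖ = 1 := fun a y => by
        rw [show -(Complex.I * a * y) = ((-(a * y) : ℝ) : ℂ) * Complex.I by push_cast; ring]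
        exact Complex.norm_exp_ofReal_mul_I _
      have hi : ∀ j k : Fin n, Integrable (fun y : ℝ =>
          Complex.exp (-(Complex.I * (x k - x j : ℝ) * y)) * c j * (starRingEnd ℂ) (c k)) μ :=
        fun j k => ((Integrable.of_bound (Continuous.aestronglyMeasurable (by fun_prop)) 1
          (ae_of_all _ fun y => (hexp _ y).le)).mul_const _).mul_const _
      simp_rw [hf, ← integral_mul_const]
      simp_rw [← integral_finsetSum _ fun k _ => hi _ k]
      rw [← integral_finsetSum _ fun j _ => integrable_finsetSum _ fun k _ => hi j k,
        ← integral_complex_ofReal]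
      congr 1
      ext y
      rw [← Complex.normSq_eq_norm_sq, ← Complex.mul_conj, map_sum, Finset.sum_mul_sum]
      refine Finset.sum_congr rfl fun j _ => Finset.sum_congr rfl fun k _ => ?_
      have : Complex.exp (-(Complex.I * (x k - x j : ℝ) * y)) =
        Complex.exp (x j * y * Complex.I) * Complex.exp (-(x k * y * Complex.I)) := by
        rw [← Complex.exp_add]; push_cast; ring_nf
      rw [this, map_mul, ← Complex.exp_conj]
      simp
      ring
    rw [e]
    exact ⟨by rw [Complex.ofReal_re]; exact integral_nonneg fun y => by positivity, Complex.ofReal_im _⟩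
end

section
/- Let f : ℝ → ℂ be continuous and bounded. Define U on the closed upper half-plane by U(x+iy) = (1/π) ∫_ℝ f(u) · y/((x−u)² + y²) du for y > 0 and U(x) = f(x) for x ∈ ℝ. Then U is bounded, continuous on the closed upper half-plane, harmonic on the open upper half-plane ℂ₊, and it is the unique function with these properties whose restriction to ℝ equals f. -/
open MeasureTheory

lemma aux_max (g : ℝ → ℝ) (a : ℝ) (hc : ContinuousAt g a) (hm : IsLocalMax g a)
    (h : 0 < iteratedDeriv 2 g a) : False := by
  have h2 : 0 < deriv (deriv g) a := by
    rw [iteratedDeriv_succ, iteratedDeriv_one] at h; exact h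
  have h1 := hm.deriv_eq_zero
  have hmin := isLocalMin_of_deriv_deriv_pos h2 h1 hc
  have he : g =ᶠ[nhds a] fun _ => g a := by
    filter_upwards [hm, hmin] with x h3 h4
    exact le_antisymm h3 h4
  have := he.deriv.deriv_eq
  simp at this
  linarith

lemma aux_log (d k a : ℝ) (h : 0 < (a + d) ^ 2 + k) :
    iteratedDeriv 2 (fun s : ℝ => Real.log ((s + d) ^ 2 + k)) a =
      (2 * ((a + d) ^ 2 + k) - 4 * (a + d) ^ 2) / ((a + d) ^ 2 + k) ^ 2 := by
  rw [iteratedDeriv_succ, iteratedDeriv_one]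
  have hq : ∀ s : ℝ, HasDerivAt (fun s : ℝ => (s + d) ^ 2 + k) (2 * (s + d)) s := by
    intro s
    have := (((hasDerivAt_id s).add_const d).pow 2).add_const k
    simpa using this
  have hev : ∀ᶠ s in nhds a, 0 < (s + d) ^ 2 + k :=
    (hq a).continuousAt.eventually (lt_mem_nhds h)
  have he : deriv (fun s : ℝ => Real.log ((s + d) ^ 2 + k)) =ᶠ[nhds a]
      fun s => 2 * (s + d) / ((s + d) ^ 2 + k) := by
    filter_upwards [hev] with s hs
    exact ((hq s).log hs.ne').deriv
  rw [he.deriv_eq]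
  have h3 : HasDerivAt (fun s : ℝ => 2 * (s + d)) 2 a := by
    simpa using ((hasDerivAt_id a).add_const d).const_mul 2
  rw [(h3.fun_div (hq a) h.ne').deriv]
  ring

lemma aux_slice {E : Type*} [NormedAddCommGroup E] [NormedSpace ℝ E] (W : ℝ → ℝ → E)
    (hd : ContDiffOn ℝ 2 (fun p : ℝ × ℝ => W p.1 p.2) {p : ℝ × ℝ | 0 < p.2})
    (x y : ℝ) (hy : 0 < y) :
    ContDiffAt ℝ 2 (fun s => W s y) x ∧ ContDiffAt ℝ 2 (fun t => W x t) y := by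
  have hn : {p : ℝ × ℝ | 0 < p.2} ∈ nhds (x, y) :=
    (isOpen_lt continuous_const continuous_snd).mem_nhds hy
  have h := hd.contDiffAt hn
  constructor
  · exact ContDiffAt.comp (g := fun p : ℝ × ℝ => W p.1 p.2) (f := fun s : ℝ => (s, y)) x h (by fun_prop)
  · exact ContDiffAt.comp (g := fun p : ℝ × ℝ => W p.1 p.2) (f := fun t : ℝ => (x, t)) y h (by fun_prop)

lemma aux_unique (w : ℝ → ℝ → ℝ) (K : ℝ) (hK : ∀ x y : ℝ, 0 ≤ y → w x y ≤ K)
    (hc : ContinuousOn (fun p : ℝ × ℝ => w p.1 p.2) {p : ℝ × ℝ | 0 ≤ p.2})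
    (hd : ContDiffOn ℝ 2 (fun p : ℝ × ℝ => w p.1 p.2) {p : ℝ × ℝ | 0 < p.2})
    (hl : ∀ x y : ℝ, 0 < y →
        iteratedDeriv 2 (fun s : ℝ => w s y) x + iteratedDeriv 2 (fun t : ℝ => w x t) y = 0)
    (h0 : ∀ x, w x 0 = 0) (x y : ℝ) (hy : 0 ≤ y) : w x y ≤ 0 := by
  set h : ℝ → ℝ → ℝ := fun x y => Real.log (x ^ 2 + (y + 2) ^ 2 - 1) with hh
  have hA : ∀ x y : ℝ, 0 ≤ y → 3 ≤ x ^ 2 + (y + 2) ^ 2 - 1 := by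
    intro x y hy; nlinarith [sq_nonneg x]
  have hpos : ∀ x y : ℝ, 0 ≤ y → 0 < h x y := fun x y hy =>
    Real.log_pos (by linarith [hA x y hy])
  have key : ∀ ε : ℝ, 0 < ε → w x y ≤ ε * h x y := by
    intro ε hε
    by_contra hcon
    push Not at hcon
    set φ : ℝ × ℝ → ℝ := fun p => w p.1 p.2 - ε * h p.1 p.2 with hφ
    have hφc : ContinuousOn φ {p : ℝ × ℝ | 0 ≤ p.2} := by
      apply hc.sub
      apply continuousOn_const.mul
      apply ContinuousOn.log (by fun_prop)
      intro p hp
      have := hA p.1 p.2 hp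
      linarith
    set R : ℝ := Real.exp (K / ε) + 2 with hR
    have hR1 : 2 < R := by have := Real.exp_pos (K / ε); linarith
    have hout : ∀ p : ℝ × ℝ, 0 ≤ p.2 → R < p.1 ^ 2 + p.2 ^ 2 → φ p ≤ 0 := by
      intro p hp hpR
      have h1 : K / ε ≤ h p.1 p.2 := by
        rw [hh, Real.le_log_iff_exp_le (by linarith [hA p.1 p.2 hp])]
        nlinarith
      have h2 := (div_le_iff₀ hε).1 h1
      have := hK p.1 p.2 hp
      simp only [hφ]; linarith
    set S : Set (ℝ × ℝ) := {p | 0 ≤ p.2} ∩ {p | p.1 ^ 2 + p.2 ^ 2 ≤ R} with hS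
    have hScomp : IsCompact S := by
      apply Metric.isCompact_of_isClosed_isBounded
      · exact (isClosed_le continuous_const continuous_snd).inter
          (isClosed_le (by fun_prop) continuous_const)
      · apply (Metric.isBounded_closedBall (x := (0 : ℝ × ℝ)) (r := R)).subset
        rintro ⟨a, b⟩ ⟨_, hp⟩
        simp only [Set.mem_ofPred_eq] at hp
        simp only [Metric.mem_closedBall, dist_zero_right, Prod.norm_def, Real.norm_eq_abs, sup_le_iff]
        constructor <;> apply abs_le_of_sq_le_sq <;> nlinarith [sq_nonneg a, sq_nonneg b]
    have hxy : 0 < φ (x, y) := by simp only [hφ]; linarith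
    have hxyS : (x, y) ∈ S := by
      refine ⟨hy, ?_⟩
      by_contra hn
      have := hout (x, y) hy (not_le.1 hn)
      linarith
    obtain ⟨q, hqS, hq⟩ := hScomp.exists_isMaxOn ⟨_, hxyS⟩ (hφc.mono fun p hp => hp.1)
    have hqpos : 0 < φ q := lt_of_lt_of_le hxy (hq hxyS)
    have hqmax : ∀ p : ℝ × ℝ, 0 ≤ p.2 → φ p ≤ φ q := by
      intro p hp
      by_cases hpR : p.1 ^ 2 + p.2 ^ 2 ≤ R
      · exact hq ⟨hp, hpR⟩
      · exact (hout p hp (not_le.1 hpR)).trans hqpos.le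
    obtain ⟨a, b⟩ := q
    have hb0 : 0 ≤ b := hqS.1
    have hb : 0 < b := by
      rcases hb0.lt_or_eq with hb | hb
      · exact hb
      · exfalso
        subst hb
        simp only [hφ, h0] at hqpos
        have := mul_pos hε (hpos a 0 le_rfl)
        linarith
    obtain ⟨hw1, hw2⟩ := aux_slice w hd a b hb
    have hA' := hA a b hb0
    have hL1 : ContDiffAt ℝ 2 (fun s : ℝ => h s b) a := by
      apply ContDiffAt.log (by fun_prop)
      linarith
    have hL2 : ContDiffAt ℝ 2 (fun t : ℝ => h a t) b := by
      apply ContDiffAt.log (by fun_prop)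
      linarith
    have e1 : iteratedDeriv 2 (fun s => h s b) a = _ :=
      (congrArg (fun g => iteratedDeriv 2 g a) (by funext s; simp only [hh]; congr 1; ring)).trans
        (aux_log 0 ((b + 2) ^ 2 - 1) a (by linarith))
    have e2 : iteratedDeriv 2 (fun t => h a t) b = _ :=
      (congrArg (fun g => iteratedDeriv 2 g b) (by funext s; simp only [hh]; congr 1; ring)).trans
        (aux_log 2 (a ^ 2 - 1) b (by linarith))
    have s1 : iteratedDeriv 2 (fun s => φ (s, b)) a =
        iteratedDeriv 2 (fun s => w s b) a - ε * iteratedDeriv 2 (fun s => h s b) a := by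
      simp only [hφ]
      rw [iteratedDeriv_fun_sub hw1 (contDiffAt_const.mul hL1), iteratedDeriv_const_mul_field]
    have s2 : iteratedDeriv 2 (fun t => φ (a, t)) b =
        iteratedDeriv 2 (fun t => w a t) b - ε * iteratedDeriv 2 (fun t => h a t) b := by
      simp only [hφ]
      rw [iteratedDeriv_fun_sub hw2 (contDiffAt_const.mul hL2), iteratedDeriv_const_mul_field]
    have hsum : iteratedDeriv 2 (fun s => h s b) a + iteratedDeriv 2 (fun t => h a t) b < 0 := by
      rw [e1, e2]
      have : (a + 0) ^ 2 + ((b + 2) ^ 2 - 1) = (b + 2) ^ 2 + (a ^ 2 - 1) := by ring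
      rw [this, ← add_div]
      apply div_neg_of_neg_of_pos
      · nlinarith
      · apply pow_pos; linarith
    have hlap := hl a b hb
    have htot : 0 < iteratedDeriv 2 (fun s => φ (s, b)) a + iteratedDeriv 2 (fun t => φ (a, t)) b := by
      rw [s1, s2]; nlinarith
    have n1 : ¬ 0 < iteratedDeriv 2 (fun s => φ (s, b)) a := fun hp =>
      aux_max _ a (hw1.continuousAt.sub (continuousAt_const.mul hL1.continuousAt))
        (Filter.Eventually.of_forall fun s => hqmax (s, b) hb0) hp
    have n2 : ¬ 0 < iteratedDeriv 2 (fun t => φ (a, t)) b := fun hp =>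
      aux_max _ b (hw2.continuousAt.sub (continuousAt_const.mul hL2.continuousAt))
        (by filter_upwards [lt_mem_nhds hb] with t ht using hqmax (a, t) ht.le) hp
    linarith
  by_contra hcon
  push Not at hcon
  have hp := hpos x y hy
  have := key (w x y / (2 * h x y)) (by positivity)
  have h2 : w x y / (2 * h x y) * h x y = w x y / 2 := by field_simp
  linarith

lemma aux_line (F : ℂ → ℂ) (S : Set ℂ) (hS : IsOpen S) (hF : DifferentiableOn ℂ F S)
    (p v : ℂ) (a : ℝ) (ha : p + a * v ∈ S) :
    iteratedDeriv 2 (fun s : ℝ => F (p + s * v)) a = v ^ 2 * deriv (deriv F) (p + a * v) := by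
  rw [iteratedDeriv_succ, iteratedDeriv_one]
  have hl : ∀ s : ℝ, HasDerivAt (fun s : ℝ => p + (s : ℂ) * v) v s := by
    intro s
    have := ((Complex.ofRealCLM.hasDerivAt (x := s)).mul_const v).const_add p
    simpa using this
  have hev : ∀ᶠ s : ℝ in nhds a, p + s * v ∈ S :=
    (hl a).continuousAt.eventually (hS.mem_nhds ha)
  have he : deriv (fun s : ℝ => F (p + s * v)) =ᶠ[nhds a] fun s => deriv F (p + s * v) * v := by
    filter_upwards [hev] with s hs
    have h1 := (hF.differentiableAt (hS.mem_nhds hs)).hasDerivAt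
    exact (HasDerivAt.comp s h1 (hl s)).deriv
  rw [he.deriv_eq]
  have h2 := ((hF.deriv hS).differentiableAt (hS.mem_nhds ha)).hasDerivAt
  have h3 := (HasDerivAt.comp a h2 (hl a)).mul_const v
  refine Eq.trans h3.deriv ?_
  ring

lemma aux_int (z : ℂ) (hz : z.im ≠ 0) : Integrable (fun u : ℝ => (‖(u : ℂ) - z‖ ^ 2)⁻¹) := by
  have h := ((integrable_inv_one_add_sq.comp_div hz).comp_sub_right z.re).const_mul ((z.im ^ 2)⁻¹)
  refine h.congr (Filter.Eventually.of_forall fun u => ?_)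
  have : ‖(u : ℂ) - z‖ ^ 2 = (u - z.re) ^ 2 + z.im ^ 2 := by
    rw [Complex.sq_norm, Complex.normSq_apply]; simp; ring
  simp only [this]
  rw [← mul_inv]
  congr 1
  field_simp
  ring

lemma aux_ne (z : ℂ) (hz : z.im ≠ 0) (u : ℝ) : (u : ℂ) - z ≠ 0 := by
  intro h
  have := congrArg Complex.im h
  simp at this
  exact hz this

lemma aux_kint (f : ℝ → ℂ) (hf : Continuous f) (M : ℝ) (hM : ∀ x, ‖f x‖ ≤ M)
    (z : ℂ) (hz : z.im ≠ 0) :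
    Integrable (fun u : ℝ => f u * (((u : ℂ) - z)⁻¹ - ((u : ℂ) - Complex.I)⁻¹)) := by
  have hI : Complex.I.im ≠ 0 := by simp
  have hg := (((aux_int z hz).add (aux_int Complex.I hI)).const_mul (M * ‖z - Complex.I‖))
  refine hg.mono' ?_ (Filter.Eventually.of_forall fun u => ?_)
  · apply Continuous.aestronglyMeasurable
    exact hf.mul (((by fun_prop : Continuous fun u : ℝ => (u : ℂ) - z).inv₀ (aux_ne z hz)).sub
      ((by fun_prop : Continuous fun u : ℝ => (u : ℂ) - Complex.I).inv₀ (aux_ne _ hI)))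
  · have h1 := aux_ne z hz u
    have h2 := aux_ne _ hI u
    have : ((u : ℂ) - z)⁻¹ - ((u : ℂ) - Complex.I)⁻¹ =
        (z - Complex.I) * (((u : ℂ) - z)⁻¹ * ((u : ℂ) - Complex.I)⁻¹) := by
      field_simp; ring
    rw [this, norm_mul, norm_mul, norm_mul, norm_inv, norm_inv]
    simp only [Pi.add_apply, ← inv_pow]
    have hM0 : 0 ≤ M := (norm_nonneg _).trans (hM u)
    rw [mul_assoc M]
    apply mul_le_mul (hM u) _ (by positivity) hM0
    apply mul_le_mul_of_nonneg_left _ (norm_nonneg _)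
    nlinarith [sq_nonneg (‖(u : ℂ) - z‖⁻¹ - ‖(u : ℂ) - Complex.I‖⁻¹), sq_nonneg ‖(u : ℂ) - z‖⁻¹,
      sq_nonneg ‖(u : ℂ) - Complex.I‖⁻¹]

lemma aux_diff (f : ℝ → ℂ) (hf : Continuous f) (M : ℝ) (hM : ∀ x, ‖f x‖ ≤ M)
    (z : ℂ) (hz : z.im ≠ 0) :
    DifferentiableAt ℂ
      (fun z : ℂ => ∫ u : ℝ, f u * (((u : ℂ) - z)⁻¹ - ((u : ℂ) - Complex.I)⁻¹)) z := by
  have hM0 : 0 ≤ M := (norm_nonneg _).trans (hM 0)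
  have hopen : IsOpen {z : ℂ | z.im ≠ 0} := isOpen_ne_fun Complex.continuous_im continuous_const
  have hr : 0 < |z.im| / 2 := by positivity
  have hfar : ∀ u : ℝ, |z.im| ≤ ‖(u : ℂ) - z‖ := by
    intro u
    have := Complex.abs_im_le_norm ((u : ℂ) - z)
    simpa using this
  have hball : ∀ w ∈ Metric.ball z (|z.im| / 2), ∀ u : ℝ, ‖(u : ℂ) - z‖ / 2 ≤ ‖(u : ℂ) - w‖ := by
    intro w hw u
    have h1 : ‖w - z‖ < |z.im| / 2 := by simpa [dist_eq_norm] using hw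
    have h2 : ‖(u : ℂ) - z‖ ≤ ‖(u : ℂ) - w‖ + ‖w - z‖ := norm_sub_le_norm_sub_add_norm_sub _ _ _
    linarith [hfar u]
  have hpos : ∀ u : ℝ, 0 < ‖(u : ℂ) - z‖ := fun u => norm_pos_iff.2 (aux_ne z hz u)
  refine (hasDerivAt_integral_of_dominated_loc_of_deriv_le
    (F' := fun w (u : ℝ) => f u * (((u : ℂ) - w) ^ 2)⁻¹)
    (bound := fun u : ℝ => (M * 4) * (‖(u : ℂ) - z‖ ^ 2)⁻¹)
    (Metric.ball_mem_nhds z hr) ?_ (aux_kint f hf M hM z hz) ?_ ?_ ?_ ?_).2.differentiableAt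
  · filter_upwards [hopen.mem_nhds hz] with w hw
    exact (aux_kint f hf M hM w hw).aestronglyMeasurable
  · apply Continuous.aestronglyMeasurable
    exact hf.mul ((by fun_prop : Continuous fun u : ℝ => ((u : ℂ) - z) ^ 2).inv₀
      fun u => pow_ne_zero _ (aux_ne z hz u))
  · refine Filter.Eventually.of_forall fun u w hw => ?_
    rw [norm_mul, norm_inv, norm_pow, mul_assoc]
    apply mul_le_mul (hM u) _ (by positivity) hM0
    have h1 := hball w hw u
    have h2 := hpos u
    have h3 : (‖(u : ℂ) - z‖ / 2) ^ 2 ≤ ‖(u : ℂ) - w‖ ^ 2 := by gcongr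
    calc (‖(u : ℂ) - w‖ ^ 2)⁻¹ ≤ ((‖(u : ℂ) - z‖ / 2) ^ 2)⁻¹ := by gcongr
      _ = 4 * (‖(u : ℂ) - z‖ ^ 2)⁻¹ := by field_simp; norm_num
  · exact (aux_int z hz).const_mul _
  · refine Filter.Eventually.of_forall fun u w hw => ?_
    have hne : (u : ℂ) - w ≠ 0 := by
      have h1 := hball w hw u
      have h2 := hpos u
      exact norm_pos_iff.1 (by linarith)
    have h := ((((hasDerivAt_id w).const_sub (u : ℂ)).inv hne).sub_const
      (((u : ℂ) - Complex.I)⁻¹)).const_mul (f u)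
    have e : f u * (- -1 / ((u : ℂ) - id w) ^ 2) = f u * (((u : ℂ) - w) ^ 2)⁻¹ := by simp
    rw [e] at h
    exact h

lemma aux_rep (f : ℝ → ℂ) (hf : Continuous f) (M : ℝ) (hM : ∀ x, ‖f x‖ ≤ M)
    (F : ℂ → ℂ)
    (hF : F = fun z : ℂ => ∫ u : ℝ, f u * (((u : ℂ) - z)⁻¹ - ((u : ℂ) - Complex.I)⁻¹))
    (x y : ℝ) (hy : 0 < y) :
    (1 / (Real.pi : ℂ)) * ∫ u : ℝ, f u * ((y / ((x - u) ^ 2 + y ^ 2) : ℝ) : ℂ) =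
    (1 / (2 * Real.pi * Complex.I)) * (F (x + y * Complex.I) - F (x + y * (-Complex.I))) := by
  have h1 : ((x : ℂ) + y * Complex.I).im ≠ 0 := by simp [hy.ne']
  have h2 : ((x : ℂ) + y * (-Complex.I)).im ≠ 0 := by simp [hy.ne']
  rw [hF]
  simp only []
  rw [← integral_sub (aux_kint f hf M hM _ h1) (aux_kint f hf M hM _ h2),
    ← integral_const_mul, ← integral_const_mul]
  congr 1
  funext u
  have e1 := aux_ne _ h1 u
  have e2 := aux_ne _ h2 u
  have e3 : ((x : ℂ) - u) ^ 2 + y ^ 2 =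
      ((u : ℂ) - (x + y * Complex.I)) * ((u : ℂ) - (x + y * (-Complex.I))) := by
    ring_nf
    simp only [Complex.I_sq]
    ring
  push_cast
  rw [e3]
  have e4 : ((u : ℂ) - (x + y * Complex.I))⁻¹ - ((u : ℂ) - Complex.I)⁻¹ -
     (((u : ℂ) - (x + y * (-Complex.I)))⁻¹ - ((u : ℂ) - Complex.I)⁻¹) =
     2 * Complex.I * (y / (((u : ℂ) - (x + y * Complex.I)) * ((u : ℂ) - (x + y * (-Complex.I))))) := by
    rw [sub_sub_sub_cancel_right]
    generalize hA : (u : ℂ) - (x + y * Complex.I) = A at *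
    generalize hB : (u : ℂ) - (x + y * (-Complex.I)) = B at *
    have : B - A = 2 * Complex.I * y := by rw [← hA, ← hB]; ring
    rw [inv_sub_inv e1 e2, this]
    ring
  rw [← mul_sub, e4]
  have := Complex.I_ne_zero
  have : (Real.pi : ℂ) ≠ 0 := by exact_mod_cast Real.pi_ne_zero
  generalize (y : ℂ) / (((u : ℂ) - (x + y * Complex.I)) * ((u : ℂ) - (x + y * (-Complex.I)))) = Q
  field_simp

lemma aux_scale (f : ℝ → ℂ) (x y : ℝ) (hy : 0 < y) :
    ∫ u : ℝ, f u * ((y / ((x - u) ^ 2 + y ^ 2) : ℝ) : ℂ) =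
    ∫ t : ℝ, f (x + y * t) * (((1 + t ^ 2)⁻¹ : ℝ) : ℂ) := by
  set G : ℝ → ℂ := fun u => f u * ((y / ((x - u) ^ 2 + y ^ 2) : ℝ) : ℂ) with hG
  have h1 : ∫ u, G u = ∫ u, G (x + u) := (integral_add_left_eq_self G x).symm
  have h2 := Measure.integral_comp_mul_left (fun u => G (x + u)) y
  rw [h1]
  have h3 : ∫ u, G (x + u) = (y : ℂ) * ∫ t, G (x + y * t) := by
    rw [h2, abs_of_pos (inv_pos.2 hy), Complex.real_smul, ← mul_assoc]
    have : (y : ℂ) ≠ 0 := by exact_mod_cast hy.ne'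
    push_cast
    rw [mul_inv_cancel₀ this, one_mul]
  rw [h3, ← integral_const_mul]
  congr 1
  funext t
  simp only [hG]
  rw [mul_left_comm, ← Complex.ofReal_mul]
  congr 2
  have : 0 < 1 + t ^ 2 := by positivity
  have h4 : (x - (x + y * t)) ^ 2 + y ^ 2 = y ^ 2 * (1 + t ^ 2) := by ring
  rw [h4]
  field_simp

/-- The Dirichlet problem for the Laplace equation in the upper half-plane:
the Poisson integral `U` of a bounded continuous boundary function `f` is
bounded, continuous up to the boundary, harmonic in the open upper half-plane,
and is the unique such function with boundary values `f`. -/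
theorem dirichlet_problem_upper_half_plane
    (f : ℝ → ℂ) (hf_cont : Continuous f) (M : ℝ) (hf_bdd : ∀ x : ℝ, ‖f x‖ ≤ M)
    (U : ℝ → ℝ → ℂ)
    (hU0 : ∀ x : ℝ, U x 0 = f x)
    (hUpos : ∀ x y : ℝ, 0 < y →
      U x y = (1 / (Real.pi : ℂ)) *
        ∫ u : ℝ, f u * ((y / ((x - u) ^ 2 + y ^ 2) : ℝ) : ℂ)) :
    ((∃ K : ℝ, ∀ x y : ℝ, 0 ≤ y → ‖U x y‖ ≤ K) ∧
      ContinuousOn (fun p : ℝ × ℝ => U p.1 p.2) {p : ℝ × ℝ | 0 ≤ p.2} ∧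
      ContDiffOn ℝ 2 (fun p : ℝ × ℝ => U p.1 p.2) {p : ℝ × ℝ | 0 < p.2} ∧
      (∀ x y : ℝ, 0 < y →
        iteratedDeriv 2 (fun s : ℝ => U s y) x + iteratedDeriv 2 (fun t : ℝ => U x t) y = 0)) ∧
    ∀ V : ℝ → ℝ → ℂ,
      (∃ K : ℝ, ∀ x y : ℝ, 0 ≤ y → ‖V x y‖ ≤ K) →
      ContinuousOn (fun p : ℝ × ℝ => V p.1 p.2) {p : ℝ × ℝ | 0 ≤ p.2} →
      ContDiffOn ℝ 2 (fun p : ℝ × ℝ => V p.1 p.2) {p : ℝ × ℝ | 0 < p.2} →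
      (∀ x y : ℝ, 0 < y →
        iteratedDeriv 2 (fun s : ℝ => V s y) x + iteratedDeriv 2 (fun t : ℝ => V x t) y = 0) →
      (∀ x : ℝ, V x 0 = f x) →
      ∀ x y : ℝ, 0 ≤ y → V x y = U x y := by
  have hpi : (Real.pi : ℂ) ≠ 0 := by exact_mod_cast Real.pi_ne_zero
  -- uniform formula on the closed half-plane
  have hUf : ∀ x y : ℝ, 0 ≤ y → U x y = (1 / (Real.pi : ℂ)) *
      ∫ t : ℝ, f (x + y * t) * (((1 + t ^ 2)⁻¹ : ℝ) : ℂ) := by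
    intro x y hy
    rcases hy.lt_or_eq with h | h
    · rw [hUpos x y h, aux_scale f x y h]
    · subst h
      rw [hU0]
      simp only [zero_mul, add_zero]
      rw [integral_const_mul, integral_complex_ofReal, integral_univ_inv_one_add_sq]
      field_simp
  have hbd : ∀ (x y t : ℝ), ‖f (x + y * t) * (((1 + t ^ 2)⁻¹ : ℝ) : ℂ)‖ ≤ M * (1 + t ^ 2)⁻¹ := by
    intro x y t
    have : 0 < (1 + t ^ 2)⁻¹ := by positivity
    rw [norm_mul, Complex.norm_real, Real.norm_of_nonneg this.le]
    exact mul_le_mul_of_nonneg_right (hf_bdd _) this.le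
  have hbi : Integrable (fun t : ℝ => M * (1 + t ^ 2)⁻¹) := integrable_inv_one_add_sq.const_mul M
  have hkc : Continuous (fun t : ℝ => (((1 + t ^ 2)⁻¹ : ℝ) : ℂ)) :=
    Complex.continuous_ofReal.comp
      ((by fun_prop : Continuous fun t : ℝ => 1 + t ^ 2).inv₀ fun t => by positivity)
  have hB : ∀ x y : ℝ, 0 ≤ y → ‖U x y‖ ≤ M := by
    intro x y hy
    rw [hUf x y hy, norm_mul]
    have h1 := norm_integral_le_of_norm_le hbi (Filter.Eventually.of_forall (hbd x y))
    rw [integral_const_mul, integral_univ_inv_one_add_sq] at h1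
    have h2 : ‖(1 / (Real.pi : ℂ))‖ = 1 / Real.pi := by
      rw [norm_div, norm_one, Complex.norm_real, Real.norm_of_nonneg Real.pi_pos.le]
    rw [h2]
    calc 1 / Real.pi * _ ≤ 1 / Real.pi * (M * Real.pi) :=
          mul_le_mul_of_nonneg_left h1 (by positivity)
      _ = M := by field_simp
  have hC : ContinuousOn (fun p : ℝ × ℝ => U p.1 p.2) {p : ℝ × ℝ | 0 ≤ p.2} := by
    have : Continuous fun p : ℝ × ℝ => (1 / (Real.pi : ℂ)) *
        ∫ t : ℝ, f (p.1 + p.2 * t) * (((1 + t ^ 2)⁻¹ : ℝ) : ℂ) := by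
      apply continuous_const.mul
      refine continuous_of_dominated (bound := fun t => M * (1 + t ^ 2)⁻¹) ?_ ?_ hbi ?_
      · intro p
        exact ((hf_cont.comp (by fun_prop)).mul hkc).aestronglyMeasurable
      · exact fun p => Filter.Eventually.of_forall (hbd p.1 p.2)
      · exact Filter.Eventually.of_forall fun t =>
          (hf_cont.comp (by fun_prop)).mul continuous_const
    exact this.continuousOn.congr fun p hp => hUf p.1 p.2 hp
  obtain ⟨F, hF⟩ : ∃ F : ℂ → ℂ,
    F = fun z : ℂ => ∫ u : ℝ, f u * (((u : ℂ) - z)⁻¹ - ((u : ℂ) - Complex.I)⁻¹) := ⟨_, rfl⟩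
  have hrep : ∀ x y : ℝ, 0 < y → U x y =
      (1 / (2 * Real.pi * Complex.I)) * (F (x + y * Complex.I) - F (x + y * (-Complex.I))) :=
    fun x y hy => (hUpos x y hy).trans (aux_rep f hf_cont M hf_bdd F hF x y hy)
  have hopen : IsOpen {z : ℂ | z.im ≠ 0} := isOpen_ne_fun Complex.continuous_im continuous_const
  have hFd : DifferentiableOn ℂ F {z : ℂ | z.im ≠ 0} := fun z hz => by
    rw [hF]; exact (aux_diff f hf_cont M hf_bdd z hz).differentiableWithinAt
  have hFc : ContDiffOn ℝ 2 F {z : ℂ | z.im ≠ 0} := (hFd.contDiffOn hopen).restrict_scalars ℝ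
  have hcd : ∀ v : ℂ, v.im ≠ 0 →
      ContDiffOn ℝ 2 (fun p : ℝ × ℝ => F (p.1 + p.2 * v)) {p : ℝ × ℝ | 0 < p.2} := by
    intro v hv
    refine hFc.comp (g := F) (f := fun p : ℝ × ℝ => (p.1 : ℂ) + p.2 * v) ?_ ?_
    · apply ContDiff.contDiffOn
      exact (Complex.ofRealCLM.contDiff.comp contDiff_fst).add
        ((Complex.ofRealCLM.contDiff.comp contDiff_snd).mul contDiff_const)
    · intro p hp
      have hp' : p.2 ≠ 0 := ne_of_gt hp
      simp [hp', hv]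
  have hvI : Complex.I.im ≠ 0 := by simp
  have hvI' : (-Complex.I).im ≠ 0 := by simp
  have hD : ContDiffOn ℝ 2 (fun p : ℝ × ℝ => U p.1 p.2) {p : ℝ × ℝ | 0 < p.2} :=
    (contDiffOn_const.mul ((hcd _ hvI).sub (hcd _ hvI'))).congr fun p hp => hrep p.1 p.2 hp
  have hH : ∀ x y : ℝ, 0 < y →
      iteratedDeriv 2 (fun s : ℝ => U s y) x + iteratedDeriv 2 (fun t : ℝ => U x t) y = 0 := by
    intro x y hy
    have a1 := aux_slice (fun x y => F (x + y * Complex.I)) (hcd _ hvI) x y hy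
    have a2 := aux_slice (fun x y => F (x + y * (-Complex.I))) (hcd _ hvI') x y hy
    have s1 : (fun s : ℝ => U s y) = fun s : ℝ => (1 / (2 * Real.pi * Complex.I)) *
        (F (s + y * Complex.I) - F (s + y * (-Complex.I))) := funext fun s => hrep s y hy
    have s2 : (fun t : ℝ => U x t) =ᶠ[nhds y] fun t : ℝ => (1 / (2 * Real.pi * Complex.I)) *
        (F (x + t * Complex.I) - F (x + t * (-Complex.I))) := by
      filter_upwards [lt_mem_nhds hy] with t ht using hrep x t ht
    have m : ∀ v : ℂ, v.im ≠ 0 → (x : ℂ) + y * v ∈ {z : ℂ | z.im ≠ 0} := by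
      intro v hv; simp [hy.ne', hv]
    have l1 : ∀ v : ℂ, v.im ≠ 0 → iteratedDeriv 2 (fun s : ℝ => F (s + y * v)) x =
        deriv (deriv F) (x + y * v) := by
      intro v hv
      have := aux_line F _ hopen hFd (y * v) 1 x (by have := m v hv; rwa [mul_one, add_comm])
      simpa [add_comm] using this
    rw [s1, s2.iteratedDeriv_eq, iteratedDeriv_const_mul_field, iteratedDeriv_const_mul_field,
      iteratedDeriv_fun_sub a1.1 a2.1, iteratedDeriv_fun_sub a1.2 a2.2, l1 _ hvI, l1 _ hvI',
      aux_line F _ hopen hFd _ _ _ (m _ hvI), aux_line F _ hopen hFd _ _ _ (m _ hvI'),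
      neg_sq, Complex.I_sq]
    ring
  refine ⟨⟨⟨M, hB⟩, hC, hD, hH⟩, ?_⟩
  rintro V ⟨K, hVK⟩ hVC hVD hVH hV0 x y hy
  set c : ℂ := (starRingEnd ℂ) (V x y - U x y) with hc
  set T : ℂ →L[ℝ] ℝ := Complex.reCLM.comp (ContinuousLinearMap.mul ℝ ℂ c) with hT
  have hTa : ∀ z, T z = (c * z).re := fun z => rfl
  have key := aux_unique (fun x y => T (V x y - U x y)) (‖T‖ * (K + M)) ?_
    (T.continuous.comp_continuousOn (hVC.sub hC)) (T.contDiff.comp_contDiffOn (hVD.sub hD)) ?_ ?_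
    x y hy
  · simp only [hTa, hc] at key
    rw [mul_comm, Complex.mul_conj, Complex.ofReal_re] at key
    have := le_antisymm key (Complex.normSq_nonneg _)
    exact sub_eq_zero.1 (Complex.normSq_eq_zero.1 this)
  · intro x y hy
    refine (le_abs_self _).trans ((T.le_opNorm _).trans ?_)
    apply mul_le_mul_of_nonneg_left _ (norm_nonneg _)
    exact (norm_sub_le _ _).trans (add_le_add (hVK x y hy) (hB x y hy))
  · intro x y hy
    have a1 := aux_slice V hVD x y hy
    have a2 := aux_slice U hD x y hy
    have comp : ∀ (g : ℝ → ℂ) (a : ℝ), ContDiffAt ℝ 2 g a →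
        iteratedDeriv 2 (fun s => T (g s)) a = T (iteratedDeriv 2 g a) := by
      intro g a hg
      rw [iteratedDeriv_eq_iteratedFDeriv, iteratedDeriv_eq_iteratedFDeriv]
      have := T.iteratedFDeriv_comp_left hg (i := 2) le_rfl
      change (iteratedFDeriv ℝ 2 (⇑T ∘ g) a) _ = _
      rw [this]
      rfl
    rw [comp _ _ (a1.1.sub a2.1), comp _ _ (a1.2.sub a2.2), iteratedDeriv_fun_sub a1.1 a2.1,
      iteratedDeriv_fun_sub a1.2 a2.2, ← map_add]
    have := hVH x y hy
    have := hH x y hy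
    rw [show ∀ a b c d : ℂ, a - b + (c - d) = (a + c) - (b + d) by intros; ring, hVH x y hy, this]
    simp
  · intro x
    simp [hV0, hU0]
end
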